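/- Assume the Extended Riemann Hypothesis. Then for every ε > 0 there exists N such that for all n ≥ N, every nontrivial monotone decreasing graph property P_n of n-vertex graphs in which every graph has at most n^{5/4−ε} edges is evasive. -/

import Mathlib

/-- A deterministic decision tree over a set of Boolean variables indexed by `ι`. -/
inductive DecisionTree (ι : Type) : Type
  | leaf : Bool → DecisionTree ι
  | node : ι → DecisionTree ι → DecisionTree ι → DecisionTree ι

namespace DecisionTree

/-- Evaluate a decision tree on an input assignment. -/
def eval {ι : Type} : DecisionTree ι → (ι → Bool) → Bool
  | leaf b, _ => b
  | node i t f, x => if x i then t.eval x else f.eval x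

/-- The depth (worst-case number of queries) of a decision tree. -/
def depth {ι : Type} : DecisionTree ι → ℕ
  | leaf _ => 0
  | node _ t f => max t.depth f.depth + 1

end DecisionTree

/-- The variables of a graph property on `n` vertices: pairs `i < j`. -/
def EdgeVar (n : ℕ) := {p : Fin n × Fin n // p.1 < p.2}

/-- The graph on `Fin n` determined by an assignment to the adjacency variables. -/
def graphOfInput {n : ℕ} (x : EdgeVar n → Bool) : SimpleGraph (Fin n) :=
  SimpleGraph.fromRel (fun i j => ∃ h : i < j, x ⟨(i, j), h⟩ = true)

/-- The deterministic query (decision-tree) complexity of a set of graphs on `Fin n`,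
viewed as a Boolean function of the adjacency variables. -/
noncomputable def queryComplexity {n : ℕ} (P : Set (SimpleGraph (Fin n))) : ℕ :=
  sInf {d | ∃ T : DecisionTree (EdgeVar n),
    (∀ x, T.eval x = true ↔ graphOfInput x ∈ P) ∧ T.depth ≤ d}

/-- A set of graphs on `Fin n` is evasive if its query complexity is `n(n-1)/2`,
the total number of adjacency variables. -/
def Evasive {n : ℕ} (P : Set (SimpleGraph (Fin n))) : Prop :=
  queryComplexity P = n * (n - 1) / 2

/-- `G` contains a (not necessarily induced) subgraph isomorphic to `H`. -/
def ContainsCopy {V : Type} (H : SimpleGraph V) {W : Type} (G : SimpleGraph W) : Prop :=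
  ∃ f : V → W, Function.Injective f ∧ ∀ v w : V, H.Adj v w → G.Adj (f v) (f w)

/-- The forbidden-subgraph property `Q_n^H`: graphs on `Fin n` containing no copy of `H`. -/
def ForbiddenSubgraphProperty {V : Type} (H : SimpleGraph V) (n : ℕ) :
    Set (SimpleGraph (Fin n)) :=
  {G | ¬ ContainsCopy H G}

/-- A prime `p` is an `ε`-near Fermat prime if `2^s ∣ p - 1` and `(p-1)/2^s ≤ p^ε`
for some `s ≥ 0`. -/
def NearFermatPrime (ε : ℝ) (p : ℕ) : Prop :=
  p.Prime ∧ ∃ s : ℕ, 2 ^ s ∣ p - 1 ∧ (((p - 1) / 2 ^ s : ℕ) : ℝ) ≤ (p : ℝ) ^ ε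

/-- A set of graphs on `Fin n` is a (labelled-vertex-invariant) graph property if it is
invariant under relabeling of the vertices. -/
def IsGraphProperty {n : ℕ} (P : Set (SimpleGraph (Fin n))) : Prop :=
  ∀ σ : Equiv.Perm (Fin n), ∀ G : SimpleGraph (Fin n),
    G ∈ P → G.map σ.toEmbedding ∈ P

/-- A set of graphs is monotone decreasing if it is closed under deletion of edges. -/
def MonotoneDecreasing {n : ℕ} (P : Set (SimpleGraph (Fin n))) : Prop :=
  ∀ G G' : SimpleGraph (Fin n), G' ≤ G → G ∈ P → G' ∈ P

/-- The Extended Riemann Hypothesis: every zero of every Dirichlet `L`-function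
in the critical strip lies on the critical line. -/
def ExtendedRiemannHypothesis : Prop :=
  ∀ (N : ℕ) [NeZero N] (χ : DirichletCharacter ℂ N) (s : ℂ),
    0 < s.re → s.re < 1 → DirichletCharacter.LFunction χ s = 0 → s.re = 1 / 2

namespace OrderComplex

set_option linter.unusedSectionVars false

variable {α : Type} [PartialOrder α] [Fintype α] [DecidableEq α]

open scoped Classical in
/-- The sign with which the vertex `a` enters the boundary of the chain `insert a c`. -/
noncomputable def sgn (K : Type) [CommRing K] (a : α) (c : Finset α) : K :=
  (-1) ^ (c.filter (· < a)).card

/-- Finite chains of elements of `S`. -/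
def IsChainIn (S : Set α) (c : Finset α) : Prop :=
  (∀ a ∈ c, a ∈ S) ∧ IsChain (· ≤ ·) (c : Set α)

/-- The augmented boundary operator on functions on finite sets; on functions supported on chains
it is the boundary operator of the order complex. -/
noncomputable def bdry (K : Type) [CommRing K] : (Finset α → K) →ₗ[K] (Finset α → K) where
  toFun f c := ∑ a ∈ cᶜ, sgn K a c * f (insert a c)
  map_add' f g := by
    ext c
    simp [mul_add, Finset.sum_add_distrib]
  map_smul' r f := by
    ext c
    simp [Finset.mul_sum, mul_left_comm]

/-- Functions supported on the chains of `S`. -/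
def chains (K : Type) [CommRing K] (S : Set α) : Submodule K (Finset α → K) where
  carrier := {f | ∀ c, ¬ IsChainIn S c → f c = 0}
  add_mem' hf hg c hc := by simp [hf c hc, hg c hc]
  zero_mem' c _ := rfl
  smul_mem' r f hf c hc := by simp [hf c hc]

/-- The order complex of `S` has vanishing reduced homology over `K`. -/
def Acyclic (K : Type) [CommRing K] (S : Set α) : Prop :=
  ∀ f ∈ chains K S, bdry K f = 0 → ∃ h ∈ chains K S, bdry K h = f

section basic

variable {K : Type} [CommRing K]

lemma bdry_apply (f : Finset α → K) (c : Finset α) :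
    bdry K f c = ∑ a ∈ cᶜ, sgn K a c * f (insert a c) := rfl

lemma sgn_mul_self (a : α) (c : Finset α) : sgn K a c * sgn K a c = 1 := by
  rw [sgn, ← mul_pow]; simp

lemma sgn_insert_of_lt {a b : α} {c : Finset α} (ha : a ∉ c) (h : a < b) :
    sgn K b (insert a c) = - sgn K b c := by
  classical
  simp only [sgn]
  rw [Finset.filter_insert, if_pos h, Finset.card_insert_of_notMem (by simp [ha]), pow_succ]
  simp

lemma sgn_insert_of_not_lt {a b : α} {c : Finset α} (h : ¬ a < b) :
    sgn K b (insert a c) = sgn K b c := by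
  classical
  simp only [sgn]
  rw [Finset.filter_insert, if_neg h]

lemma IsChainIn.subset {S : Set α} {c d : Finset α} (h : IsChainIn S d) (hcd : c ⊆ d) :
    IsChainIn S c :=
  ⟨fun a ha => h.1 a (hcd ha), h.2.mono (by exact_mod_cast hcd)⟩

lemma IsChainIn.mono {S T : Set α} {c : Finset α} (h : IsChainIn S c) (hST : S ⊆ T) :
    IsChainIn T c := ⟨fun a ha => hST (h.1 a ha), h.2⟩

lemma chains_mono {S T : Set α} (hST : S ⊆ T) : chains K S ≤ chains K T :=
  fun _ hf c hc => hf c fun h => hc (h.mono hST)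

lemma bdry_mem {S : Set α} {f : Finset α → K} (hf : f ∈ chains K S) :
    bdry K f ∈ chains K S := by
  intro c hc
  rw [bdry_apply]
  refine Finset.sum_eq_zero fun a _ => ?_
  rw [hf _ fun h => hc (h.subset (Finset.subset_insert _ _)), mul_zero]

lemma IsChainIn.lt_or_lt {S : Set α} {c : Finset α} (h : IsChainIn S c) {a b : α}
    (ha : a ∈ c) (hb : b ∈ c) (hab : a ≠ b) : a < b ∨ b < a := by
  rcases h.2 ha hb hab with h | h
  · exact Or.inl (lt_of_le_of_ne h hab)
  · exact Or.inr (lt_of_le_of_ne h hab.symm)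

/-- The signs of the two ways to remove a pair of comparable vertices cancel. -/
lemma sgn_mul_sgn_insert {a b : α} {c : Finset α} (ha : a ∉ c) (hb : b ∉ c)
    (h : a < b ∨ b < a) :
    sgn K a c * sgn K b (insert a c) = - (sgn K b c * sgn K a (insert b c)) := by
  rcases h with h | h
  · rw [sgn_insert_of_lt ha h, sgn_insert_of_not_lt h.not_gt]; ring
  · rw [sgn_insert_of_lt hb h, sgn_insert_of_not_lt h.not_gt]; ring

lemma bdry_bdry {S : Set α} {f : Finset α → K} (hf : f ∈ chains K S) :
    bdry K (bdry K f) = 0 := by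
  ext c
  simp only [bdry_apply, Finset.mul_sum, Pi.zero_apply]
  rw [Finset.sum_sigma']
  refine Finset.sum_involution (fun x _ => ⟨x.2, x.1⟩) ?_ ?_ ?_ ?_
  · rintro ⟨a, b⟩ hx
    simp only [Finset.mem_sigma, Finset.mem_compl, Finset.mem_insert, not_or] at hx
    obtain ⟨ha, hba, hb⟩ := hx
    by_cases hc : IsChainIn S (insert b (insert a c))
    · have hlt := hc.lt_or_lt (a := a) (b := b) (by simp) (by simp) (Ne.symm hba)
      simp only
      rw [← mul_assoc, ← mul_assoc, sgn_mul_sgn_insert ha hb hlt, Finset.insert_comm]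
      ring
    · simp only
      rw [Finset.insert_comm a b c, hf _ hc]; simp
  · rintro ⟨a, b⟩ hx _ heq
    simp only [Finset.mem_sigma, Finset.mem_compl, Finset.mem_insert, not_or] at hx
    simp only [Sigma.mk.injEq] at heq
    exact hx.2.1 heq.1
  · rintro ⟨a, b⟩ hx
    simp only [Finset.mem_sigma, Finset.mem_compl, Finset.mem_insert, not_or] at hx ⊢
    exact ⟨hx.2.2, Ne.symm hx.2.1, hx.1⟩
  · rintro ⟨a, b⟩ _; rfl

/-- Mayer–Vietoris: a union of two acyclic subcomplexes with acyclic intersection is acyclic. -/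
lemma Acyclic.union {U W : Set α} (hU : Acyclic K U) (hW : Acyclic K W)
    (hUW : Acyclic K (U ∩ W))
    (hc : ∀ c : Finset α, IsChainIn (U ∪ W) c → IsChainIn U c ∨ IsChainIn W c) :
    Acyclic K (U ∪ W) := by
  classical
  intro z hz hdz
  set u : Finset α → K := fun c => if IsChainIn U c then z c else 0 with hu_def
  set w : Finset α → K := z - u with hw_def
  have hu : u ∈ chains K U := fun c hc => by simp [hu_def, hc]
  have hw : w ∈ chains K W := fun c hcW => by
    by_cases hcU : IsChainIn U c
    · simp [hw_def, hu_def, hcU]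
    · have : z c = 0 := hz c fun h => (hc c h).elim hcU hcW
      simp [hw_def, hu_def, this]
  have hsum : bdry K u + bdry K w = 0 := by
    rw [← map_add, hw_def, add_sub_cancel, hdz]
  have hdu : bdry K u ∈ chains K (U ∩ W) := by
    intro c hcUW
    by_cases hcU : IsChainIn U c
    · have hcW : ¬ IsChainIn W c := fun h => hcUW ⟨fun a ha => ⟨hcU.1 a ha, h.1 a ha⟩, h.2⟩
      have h1 := congrFun hsum c
      simpa [bdry_mem hw c hcW] using h1
    · exact bdry_mem hu c hcU
  obtain ⟨v, hv, hdv⟩ := hUW _ hdu (bdry_bdry hu)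
  obtain ⟨u', hu', hdu'⟩ := hU (u - v) (sub_mem hu (chains_mono Set.inter_subset_left hv))
    (by rw [map_sub, hdv, sub_self])
  obtain ⟨w', hw', hdw'⟩ := hW (w + v) (add_mem hw (chains_mono Set.inter_subset_right hv))
    (by rw [map_add, hdv, add_comm, hsum])
  refine ⟨u' + w', add_mem (chains_mono Set.subset_union_left hu')
    (chains_mono Set.subset_union_right hw'), ?_⟩
  rw [map_add, hdu', hdw', hw_def]
  abel

/-- A poset with an element comparable to all others is acyclic. -/
lemma acyclic_of_comparable {S : Set α} {e : α} (he : e ∈ S)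
    (hcomp : ∀ a ∈ S, a ≤ e ∨ e ≤ a) : Acyclic K S := by
  classical
  intro f hf hdf
  refine ⟨fun c => if e ∈ c then sgn K e (c.erase e) * f (c.erase e) else 0, ?_, ?_⟩
  · intro c hc
    by_cases hec : e ∈ c
    · simp only [hec, if_true]
      rw [hf, mul_zero]
      intro h
      refine hc ⟨fun a ha => ?_, ?_⟩
      · by_cases hae : a = e
        · exact hae ▸ he
        · exact h.1 a (Finset.mem_erase.2 ⟨hae, ha⟩)
      · have h2 : (c : Set α) = insert e ((c.erase e : Finset α) : Set α) := by
          rw [← Finset.coe_insert, Finset.insert_erase hec]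
        rw [h2]
        exact h.2.insert fun b hb _ => (hcomp b (h.1 b hb)).symm
    · simp [hec]
  · ext c
    rw [bdry_apply]
    by_cases hec : e ∈ c
    · have h0 := congrFun hdf (c.erase e)
      rw [bdry_apply, Finset.compl_erase, Finset.sum_insert (by simp [hec]),
        Finset.insert_erase hec, Pi.zero_apply] at h0
      have key : ∀ a ∈ cᶜ, sgn K a c * (if e ∈ insert a c then
          sgn K e ((insert a c).erase e) * f ((insert a c).erase e) else 0) =
          - sgn K e (c.erase e) * (sgn K a (c.erase e) * f (insert a (c.erase e))) := by
        intro a ha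
        have hac : a ∉ c := by simpa using ha
        have hae : a ≠ e := fun h => hac (h ▸ hec)
        have h1 : (insert a c).erase e = insert a (c.erase e) := by
          rw [Finset.erase_insert_of_ne hae]
        rw [if_pos (Finset.mem_insert_of_mem hec), h1]
        by_cases hch : IsChainIn S (insert a (c.erase e))
        · have hlt : a < e ∨ e < a := by
            rcases hcomp a (hch.1 a (by simp)) with h | h
            · exact Or.inl (lt_of_le_of_ne h hae)
            · exact Or.inr (lt_of_le_of_ne h hae.symm)
          have h2 : sgn K a c = sgn K a (insert e (c.erase e)) := by
            rw [Finset.insert_erase hec]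
          rcases hlt with h | h
          · rw [h2, sgn_insert_of_lt (by simp [hac]) h, sgn_insert_of_not_lt h.not_gt]; ring
          · rw [h2, sgn_insert_of_lt (by simp) h, sgn_insert_of_not_lt h.not_gt]; ring
        · rw [hf _ hch]; simp
      rw [Finset.sum_congr rfl key, ← Finset.mul_sum, eq_neg_of_add_eq_zero_right h0]
      linear_combination (f c) * sgn_mul_self (K := K) e (c.erase e)
    · rw [Finset.sum_eq_single e]
      · rw [if_pos (Finset.mem_insert_self _ _), Finset.erase_insert hec, ← mul_assoc,
          sgn_mul_self, one_mul]
      · intro a _ hae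
        rw [if_neg, mul_zero]
        simp [hec, Ne.symm hae]
      · intro h
        exact absurd (Finset.mem_compl.2 hec) h

/-- Adding a vertex with acyclic link preserves acyclicity. -/
lemma Acyclic.insert {S : Set α} {a : α} (hS : Acyclic K S) (ha : a ∉ S)
    (hlink : Acyclic K {b ∈ S | b ≤ a ∨ a ≤ b}) : Acyclic K (insert a S) := by
  have h1 : Insert.insert a S = S ∪ {b | b = a ∨ b ∈ S ∧ (b ≤ a ∨ a ≤ b)} := by
    ext b; simp; tauto
  rw [h1]
  refine hS.union (acyclic_of_comparable (e := a) (by simp) ?_) ?_ ?_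
  · rintro b (rfl | hb)
    · exact Or.inl le_rfl
    · exact hb.2
  · convert hlink using 1
    ext b
    simp only [Set.mem_inter_iff, Set.mem_ofPred_eq]
    constructor
    · rintro ⟨hb, rfl | h⟩
      · exact absurd hb ha
      · exact h
    · rintro ⟨hb, h⟩; exact ⟨hb, Or.inr ⟨hb, h⟩⟩
  · rw [← h1]
    intro c hc
    by_cases hac : a ∈ c
    · right
      refine ⟨fun b hb => ?_, hc.2⟩
      by_cases hba : b = a
      · exact Or.inl hba
      · exact Or.inr ⟨(hc.1 b hb).resolve_left hba, hc.2 hb hac hba⟩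
    · left
      refine ⟨fun b hb => (hc.1 b hb).resolve_left fun h => hac (h ▸ hb), hc.2⟩

end basic
end OrderComplex

namespace OrderComplex

set_option linter.unusedSectionVars false

section perm

variable {X : Type} [Fintype X] {K : Type} [Field K]

/-- For a permutation of prime order, the indicator function of a set of representatives of the
nontrivial cycles. -/
lemma exists_cycle_representatives (π : Equiv.Perm X) {p : ℕ} (hp : p.Prime) (hπ : π ^ p = 1) :
    ∃ R : X → K, ∀ x, π x ≠ x → ∑ j ∈ Finset.range p, R ((π ^ j) x) = 1 := by
  classical
  let rep : X → X := fun x => (Quotient.mk (Equiv.Perm.SameCycle.setoid π) x).out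
  have hrep : ∀ x, π.SameCycle (rep x) x := fun x =>
    Quotient.exact (Quotient.out_eq (Quotient.mk (Equiv.Perm.SameCycle.setoid π) x))
  have hrep_pow : ∀ x j, rep ((π ^ j : Equiv.Perm X) x) = rep x := by
    intro x j
    have : Quotient.mk (Equiv.Perm.SameCycle.setoid π) ((π ^ j : Equiv.Perm X) x) =
        Quotient.mk (Equiv.Perm.SameCycle.setoid π) x :=
      Quotient.sound (Equiv.Perm.sameCycle_pow_left.2 (Equiv.Perm.SameCycle.refl π x))
    simp only [rep, this]
  refine ⟨fun x => if x = rep x then 1 else 0, fun x hx => ?_⟩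
  obtain ⟨i, hi⟩ := (hrep x).symm.exists_nat_pow_eq
  have hmod : (π ^ (i % p)) x = rep x := by
    rw [← hi, pow_eq_pow_mod i hπ]
  rw [Finset.sum_eq_single (i % p)]
  · exact if_pos (by rw [hrep_pow, hmod])
  · intro j hj hne
    refine if_neg fun heq => ?_
    rw [hrep_pow, ← hmod] at heq
    apply hx
    have hjp : j < p := Finset.mem_range.1 hj
    have hip : i % p < p := Nat.mod_lt _ hp.pos
    have main : ∀ a b : ℕ, a < b → b < p → (π ^ a) x = (π ^ b) x → π x = x := by
      intro a b hab hb h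
      have h1 : (π ^ (b - a)) x = x := by
        have : (π ^ b) x = (π ^ a) ((π ^ (b - a)) x) := by
          rw [← Equiv.Perm.mul_apply, ← pow_add]; congr 2; omega
        rw [this] at h
        exact ((π ^ a).injective h).symm
      have h2 : Function.IsPeriodicPt π (b - a) x := by
        simpa [Function.IsPeriodicPt, Function.IsFixedPt, ← Equiv.Perm.coe_pow] using h1
      have h3 : Function.IsPeriodicPt π p x := by
        simp [Function.IsPeriodicPt, Function.IsFixedPt, ← Equiv.Perm.coe_pow, hπ]
      have h4 := h2.gcd h3
      have h5 : (b - a).gcd p = 1 := by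
        apply Nat.Coprime.symm
        apply (Nat.Prime.coprime_iff_not_dvd hp).2
        exact fun h => absurd (Nat.le_of_dvd (by omega) h) (by omega)
      rw [h5] at h4
      simpa [Function.IsPeriodicPt, Function.IsFixedPt] using h4
    rcases lt_or_gt_of_ne hne with h | h
    · exact main _ _ h hip heq
    · exact main _ _ h hjp heq.symm
  · intro h
    exact absurd (Finset.mem_range.2 (Nat.mod_lt _ hp.pos)) h

end perm

section action

variable {α : Type} [PartialOrder α] [Fintype α] [DecidableEq α] {K : Type} [Field K]

/-- An order automorphism acts on finite sets. -/
def permFinset (e : α ≃o α) : Equiv.Perm (Finset α) := e.toEquiv.finsetCongr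

lemma permFinset_apply (e : α ≃o α) (c : Finset α) :
    permFinset e c = c.map e.toEquiv.toEmbedding := rfl

/-- Pullback of functions on finite sets along an order automorphism. -/
def pull (K : Type) [Field K] (e : α ≃o α) : Module.End K (Finset α → K) where
  toFun f c := f (permFinset e c)
  map_add' _ _ := rfl
  map_smul' _ _ := rfl

lemma pull_apply (e : α ≃o α) (f : Finset α → K) (c : Finset α) :
    pull K e f c = f (permFinset e c) := rfl

lemma pull_pow_apply (e : α ≃o α) (j : ℕ) (f : Finset α → K) (c : Finset α) :
    (pull K e ^ j) f c = f ((permFinset e ^ j) c) := by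
  induction j generalizing f c with
  | zero => simp
  | succ j ih => rw [pow_succ, Module.End.mul_apply, ih, pull_apply, pow_succ',
      Equiv.Perm.mul_apply]

lemma mem_permFinset {e : α ≃o α} {c : Finset α} {a : α} :
    e a ∈ permFinset e c ↔ a ∈ c := by
  simp [permFinset_apply]

lemma sgn_permFinset (e : α ≃o α) (a : α) (c : Finset α) :
    sgn K (e a) (permFinset e c) = sgn K a c := by
  classical
  simp only [sgn, permFinset_apply, Finset.filter_map, Finset.card_map]
  congr 2
  ext b
  simp

lemma pull_bdry (e : α ≃o α) : Commute (pull K e) (bdry K) := by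
  refine LinearMap.ext fun f => funext fun c => ?_
  change bdry K f (permFinset e c) = bdry K (pull K e f) c
  simp only [pull_apply, bdry_apply]
  symm
  refine Finset.sum_bij (fun a _ => e a) ?_ ?_ ?_ ?_
  · intro a ha
    simpa [mem_permFinset] using ha
  · intro a _ b _ h
    exact e.injective h
  · intro b hb
    refine ⟨e.symm b, ?_, by simp⟩
    rw [Finset.mem_compl, ← mem_permFinset (e := e)]
    simpa using hb
  · intro a _
    rw [sgn_permFinset]
    congr 2
    simp [permFinset_apply]

lemma isChainIn_permFinset {S : Set α} {e : α ≃o α} (hS : ∀ a, e a ∈ S ↔ a ∈ S) {c : Finset α} :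
    IsChainIn S (permFinset e c) ↔ IsChainIn S c := by
  constructor
  · intro h
    refine ⟨fun a ha => (hS a).1 (h.1 _ (mem_permFinset.2 ha)), fun a ha b hb hab => ?_⟩
    have := h.2 (mem_permFinset.2 ha) (mem_permFinset.2 hb) (e.injective.ne hab)
    simpa using this
  · intro h
    refine ⟨fun a ha => ?_, fun a ha b hb hab => ?_⟩
    · obtain ⟨a, rfl⟩ := e.surjective a
      exact (hS a).2 (h.1 a (mem_permFinset.1 ha))
    · obtain ⟨a, rfl⟩ := e.surjective a
      obtain ⟨b, rfl⟩ := e.surjective b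
      simpa using h.2 (mem_permFinset.1 ha) (mem_permFinset.1 hb) (fun h => hab (h ▸ rfl))

lemma pull_mem {S : Set α} {e : α ≃o α} (hS : ∀ a, e a ∈ S ↔ a ∈ S) {f : Finset α → K}
    (hf : f ∈ chains K S) : pull K e f ∈ chains K S :=
  fun _ hc => hf _ fun h => hc ((isChainIn_permFinset hS).1 h)

lemma pull_pow_mem {S : Set α} {e : α ≃o α} (hS : ∀ a, e a ∈ S ↔ a ∈ S) (j : ℕ)
    {f : Finset α → K} (hf : f ∈ chains K S) : (pull K e ^ j) f ∈ chains K S := by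
  induction j with
  | zero => simpa using hf
  | succ j ih => rw [pow_succ', Module.End.mul_apply]; exact pull_mem hS ih

/-- An order automorphism of a finite poset moves no element to a comparable one. -/
lemma eq_of_comparable (e : α ≃o α) {a : α} (h : e a ≤ a ∨ a ≤ e a) : e a = a := by
  have key : ∀ g : α ≃o α, ¬ a < g a := fun g h =>
    not_injective_infinite_finite _ (g.strictMono.strictMono_iterate_of_lt_map h).injective
  by_contra hne
  rcases h with h | h
  · exact key e.symm (by simpa using e.symm.strictMono (lt_of_le_of_ne h hne))
  · exact key e (lt_of_le_of_ne h (Ne.symm hne))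

lemma isChainIn_fixed_iff {S : Set α} {e : α ≃o α} {c : Finset α} :
    IsChainIn {a ∈ S | e a = a} c ↔ IsChainIn S c ∧ permFinset e c = c := by
  constructor
  · intro h
    refine ⟨h.mono fun a ha => ha.1, ?_⟩
    ext b
    obtain ⟨b, rfl⟩ := e.surjective b
    rw [mem_permFinset]
    constructor
    · intro hb; rw [(h.1 b hb).2]; exact hb
    · intro hb
      have := (h.1 _ hb).2
      rw [e.injective this] at hb
      exact hb
  · rintro ⟨h, hc⟩
    refine ⟨fun a ha => ⟨h.1 a ha, ?_⟩, h.2⟩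
    have hea : e a ∈ c := by rw [← hc]; exact mem_permFinset.2 ha
    by_cases hne : e a = a
    · exact hne
    · exact eq_of_comparable e (h.2 hea ha hne)

lemma permFinset_pow (e : α ≃o α) {p : ℕ} (he : ∀ a, e^[p] a = a) : permFinset e ^ p = 1 := by
  have key : ∀ (j : ℕ) (c : Finset α), (permFinset e ^ j) c = c.image e^[j] := by
    intro j
    induction j with
    | zero => intro c; simp
    | succ j ih =>
      intro c
      rw [pow_succ, Equiv.Perm.mul_apply, ih, permFinset_apply, Finset.map_eq_image,
        Finset.image_image]
      rfl
  ext1 c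
  rw [key]
  ext a
  simp [he]

end action
end OrderComplex

namespace OrderComplex

set_option linter.unusedSectionVars false

section smith

variable {α : Type} [PartialOrder α] [Fintype α] [DecidableEq α] {K : Type} [Field K]

/-- Functions supported on sets of cardinality `n`. -/
def Homogeneous (n : ℕ) (f : Finset α → K) : Prop := ∀ c, c.card ≠ n → f c = 0

/-- The restriction of a function to the sets of cardinality `n`. -/
def component (n : ℕ) (f : Finset α → K) : Finset α → K := fun c => if c.card = n then f c else 0

lemma component_mem {S : Set α} {f : Finset α → K} (n : ℕ) (hf : f ∈ chains K S) :
    component n f ∈ chains K S := fun c hc => by simp [component, hf c hc]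

lemma component_homogeneous (n : ℕ) (f : Finset α → K) : Homogeneous n (component n f) :=
  fun c hc => by simp [component, hc]

lemma bdry_component (n : ℕ) (f : Finset α → K) :
    bdry K (component (n + 1) f) = component n (bdry K f) := by
  ext c
  rw [component]
  simp only [bdry_apply]
  split_ifs with h
  · refine Finset.sum_congr rfl fun a ha => ?_
    rw [component, if_pos]
    rw [Finset.card_insert_of_notMem (by simpa using ha), h]
  · refine Finset.sum_eq_zero fun a ha => ?_
    rw [component, if_neg, mul_zero]
    rw [Finset.card_insert_of_notMem (by simpa using ha)]
    omega

lemma sum_component (f : Finset α → K) :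
    ∑ n ∈ Finset.range (Fintype.card α + 1), component n f = f := by
  ext c
  rw [Finset.sum_apply, Finset.sum_eq_single c.card]
  · simp [component]
  · intro n _ hn; simp [component, hn.symm]
  · intro h
    exact absurd (Finset.mem_range.2 (Nat.lt_succ_of_le c.card_le_univ)) h

/-- The restriction of a function to the sets fixed by an automorphism. -/
def fixPart (e : α ≃o α) (f : Finset α → K) : Finset α → K :=
  fun c => if permFinset e c = c then f c else 0

lemma fixPart_mem {S : Set α} {e : α ≃o α} {f : Finset α → K} (hf : f ∈ chains K S) :
    fixPart e f ∈ chains K {a ∈ S | e a = a} := by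
  intro c hc
  rw [fixPart]
  split_ifs with h
  · exact hf c fun h' => hc (isChainIn_fixed_iff.2 ⟨h', h⟩)
  · rfl

/-- The properties of the operators `1 - e` and `1 + e + ⋯ + e ^ (p - 1)` used in Smith theory. -/
structure SmithPair (S : Set α) (e : α ≃o α) (ρ ρ' : Module.End K (Finset α → K)) : Prop where
  comm : Commute ρ (bdry K)
  comm' : Commute ρ' (bdry K)
  mem : ∀ f ∈ chains K S, ρ f ∈ chains K S
  homogeneous : ∀ n f, Homogeneous n f → Homogeneous n (ρ f)
  mul_eq_zero : ρ * ρ' = 0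
  apply_fixed : ∀ f c, permFinset e c = c → ρ' f c = 0
  decomp : ∀ f ∈ chains K S, ρ f = 0 → ∃ h ∈ chains K S, f = ρ' h + fixPart e f

lemma SmithPair.lift {S : Set α} {e : α ≃o α} {ρ ρ' : Module.End K (Finset α → K)}
    (H : SmithPair S e ρ ρ') (hS : Acyclic K S) {n : ℕ}
    (IH : ∀ y ∈ chains K S, Homogeneous (n + 1) (ρ y) → bdry K (ρ y) = 0 →
      ∃ y' ∈ chains K S, ρ y = bdry K (ρ y'))
    {z : Finset α → K} (hz : z ∈ chains K S) (hzn : Homogeneous n z) (hρ : ρ z = 0)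
    (hdz : bdry K z = 0) :
    ∃ v ∈ chains K S, ρ v = 0 ∧ bdry K v = z := by
  obtain ⟨u, hu, hdu⟩ := hS z hz hdz
  set v := component (n + 1) u with hv
  have hvm : v ∈ chains K S := component_mem _ hu
  have hdv : bdry K v = z := by
    rw [hv, bdry_component, hdu]
    ext c
    rw [component]
    split_ifs with h
    · rfl
    · exact (hzn c h).symm
  have hcomm : ∀ f, ρ (bdry K f) = bdry K (ρ f) := fun f => LinearMap.congr_fun H.comm.eq f
  obtain ⟨y, hy, hyv⟩ := IH v hvm (H.homogeneous _ _ (component_homogeneous _ _))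
    (by rw [← hcomm, hdv, hρ])
  refine ⟨v - bdry K y, sub_mem hvm (bdry_mem hy), ?_, ?_⟩
  · rw [map_sub, hcomm, hyv, sub_self]
  · rw [map_sub, hdv, bdry_bdry hy, sub_zero]

/-- A cycle is the boundary of the fixed part of a chain, up to the image of `ρ'`. -/
lemma SmithPair.eq_bdry {S : Set α} {e : α ≃o α} {ρ ρ' : Module.End K (Finset α → K)}
    (H : SmithPair S e ρ ρ') {z v y : Finset α → K} (hv : v ∈ chains K S) (hρ : ρ v = 0)
    (hdv : bdry K v = z) (hz : z = ρ' y) : ∃ h ∈ chains K S, z = bdry K (ρ' h) := by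
  obtain ⟨h, hh, hvh⟩ := H.decomp v hv hρ
  refine ⟨h, hh, ?_⟩
  have hcomm : ∀ f, ρ' (bdry K f) = bdry K (ρ' f) := fun f => LinearMap.congr_fun H.comm'.eq f
  have h1 : z - bdry K (ρ' h) = bdry K (fixPart e v) := by
    rw [← hdv]
    conv_lhs => rw [hvh]
    rw [map_add, add_sub_cancel_left]
  have h2 : z - bdry K (ρ' h) = ρ' (y - bdry K h) := by rw [map_sub, hcomm, hz]
  rw [← sub_eq_zero]
  ext c
  by_cases hc : permFinset e c = c
  · rw [h2, H.apply_fixed _ _ hc]; rfl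
  · rw [h1]
    exact bdry_mem (fixPart_mem hv) c fun h => hc (isChainIn_fixed_iff.1 h).2

lemma SmithPair.exact {S : Set α} {e : α ≃o α} {ρ ρ' : Module.End K (Finset α → K)}
    (H : SmithPair S e ρ ρ') (H' : SmithPair S e ρ' ρ) (hS : Acyclic K S) (m n : ℕ)
    (hn : Fintype.card α < n + m) :
    (∀ y ∈ chains K S, Homogeneous n (ρ y) → bdry K (ρ y) = 0 →
      ∃ y' ∈ chains K S, ρ y = bdry K (ρ y')) ∧
    (∀ y ∈ chains K S, Homogeneous n (ρ' y) → bdry K (ρ' y) = 0 →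
      ∃ y' ∈ chains K S, ρ' y = bdry K (ρ' y')) := by
  induction m generalizing n with
  | zero =>
    have key : ∀ f : Finset α → K, Homogeneous n f → f = 0 := fun f hf => by
      ext c
      exact hf c (by have := c.card_le_univ; omega)
    exact ⟨fun y _ h _ => ⟨0, zero_mem _, by simpa using key _ h⟩,
      fun y _ h _ => ⟨0, zero_mem _, by simpa using key _ h⟩⟩
  | succ m ih =>
    obtain ⟨ih1, ih2⟩ := ih (n + 1) (by omega)
    constructor
    · intro y hy hn hd
      obtain ⟨v, hv, hρ, hdv⟩ := H'.lift hS ih2 (H.mem y hy) hn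
        (LinearMap.congr_fun H'.mul_eq_zero y) hd
      exact H'.eq_bdry hv hρ hdv rfl
    · intro y hy hn hd
      obtain ⟨v, hv, hρ, hdv⟩ := H.lift hS ih1 (H'.mem y hy) hn
        (LinearMap.congr_fun H.mul_eq_zero y) hd
      exact H.eq_bdry hv hρ hdv rfl

section operators

variable {S : Set α} {e : α ≃o α} {p : ℕ}

lemma pull_pow_eq_one (he : ∀ a, e^[p] a = a) : pull K e ^ p = 1 := by
  refine LinearMap.ext fun f => funext fun c => ?_
  rw [pull_pow_apply, permFinset_pow e he]; rfl

lemma pull_pow_apply_fixed (j : ℕ) (f : Finset α → K) {c : Finset α} (hc : permFinset e c = c) :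
    (pull K e ^ j) f c = f c := by
  rw [pull_pow_apply]
  congr 1
  have : Function.IsFixedPt (permFinset e) c := hc
  rw [Equiv.Perm.coe_pow]
  exact this.iterate j

lemma pull_pow_homogeneous (j : ℕ) {n : ℕ} {f : Finset α → K} (hf : Homogeneous n f) :
    Homogeneous n ((pull K e ^ j) f) := by
  induction j with
  | zero => simpa using hf
  | succ j ih =>
    rw [pow_succ', Module.End.mul_apply]
    intro c hc
    rw [pull_apply]
    apply ih
    simpa [permFinset_apply] using hc

lemma smithPair_sub_sum (hS : ∀ a, e a ∈ S ↔ a ∈ S) (hp : p.Prime) [CharP K p]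
    (he : ∀ a, e^[p] a = a) :
    SmithPair S e (1 - pull K e) (∑ j ∈ Finset.range p, pull K e ^ j) where
  comm := (Commute.one_left _).sub_left (pull_bdry e)
  comm' := Commute.sum_left _ _ _ fun j _ => (pull_bdry e).pow_left j
  mem f hf := sub_mem hf (pull_mem hS hf)
  homogeneous n f hf c hc := by
    have := pull_pow_homogeneous (e := e) 1 hf c hc
    rw [pow_one] at this
    simp [hf c hc, this]
  mul_eq_zero := by
    rw [mul_neg_geom_sum, pull_pow_eq_one he, sub_self]
  apply_fixed f c hc := by
    rw [LinearMap.sum_apply, Finset.sum_apply]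
    simp [pull_pow_apply_fixed _ f hc]
  decomp f hf hTf := by
    obtain ⟨R, hR⟩ := exists_cycle_representatives (K := K) (permFinset e) hp (permFinset_pow e he)
    refine ⟨R * f, fun c hc => by simp [hf c hc], ?_⟩
    have h1 : pull K e f = f := (sub_eq_zero.1 hTf).symm
    have h2 : ∀ j, (pull K e ^ j) f = f := fun j => by
      induction j with
      | zero => simp
      | succ j ih => rw [pow_succ, Module.End.mul_apply, h1, ih]
    ext c
    rw [Pi.add_apply, LinearMap.sum_apply, Finset.sum_apply]
    by_cases hc : permFinset e c = c
    · simp [pull_pow_apply_fixed _ _ hc, fixPart, hc]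
    · rw [fixPart, if_neg hc, add_zero]
      have h3 : ∀ j ∈ Finset.range p, (pull K e ^ j) (R * f) c =
          R ((permFinset e ^ j) c) * f c := by
        intro j _
        rw [pull_pow_apply, Pi.mul_apply, ← pull_pow_apply e j f, h2]
      rw [Finset.sum_congr rfl h3, ← Finset.sum_mul, hR c hc, one_mul]

lemma smithPair_sum_sub (hS : ∀ a, e a ∈ S ↔ a ∈ S) (hp : p.Prime) [CharP K p]
    (he : ∀ a, e^[p] a = a) :
    SmithPair S e (∑ j ∈ Finset.range p, pull K e ^ j) (1 - pull K e) where
  comm := Commute.sum_left _ _ _ fun j _ => (pull_bdry e).pow_left j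
  comm' := (Commute.one_left _).sub_left (pull_bdry e)
  mem f hf := by
    rw [LinearMap.sum_apply]
    exact sum_mem fun j _ => pull_pow_mem hS j hf
  homogeneous n f hf c hc := by
    rw [LinearMap.sum_apply, Finset.sum_apply]
    exact Finset.sum_eq_zero fun j _ => pull_pow_homogeneous j hf c hc
  mul_eq_zero := by
    rw [geom_sum_mul_neg, pull_pow_eq_one he, sub_self]
  apply_fixed f c hc := by
    have := pull_pow_apply_fixed (e := e) 1 f hc
    rw [pow_one] at this
    simp [this]
  decomp f hf hNf := by
    obtain ⟨R, hR⟩ := exists_cycle_representatives (K := K) (permFinset e) hp (permFinset_pow e he)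
    let g : ℕ → Finset α → K := fun j => R * (pull K e ^ (p - j)) f
    have hg : ∀ j, g j ∈ chains K S := fun j c hc => by
      have := pull_pow_mem hS (p - j) hf c hc
      simp [g, this]
    refine ⟨- ∑ j ∈ Finset.range p, (∑ i ∈ Finset.range j, pull K e ^ i) (g j),
      neg_mem (sum_mem fun j _ => ?_), ?_⟩
    · rw [LinearMap.sum_apply]
      exact sum_mem fun i _ => pull_pow_mem hS i (hg j)
    have h1 : (1 - pull K e) (- ∑ j ∈ Finset.range p, (∑ i ∈ Finset.range j, pull K e ^ i) (g j)) =
        ∑ j ∈ Finset.range p, ((pull K e ^ j) (g j) - g j) := by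
      rw [map_neg, map_sum, ← Finset.sum_neg_distrib]
      refine Finset.sum_congr rfl fun j _ => ?_
      rw [← Module.End.mul_apply, mul_neg_geom_sum, LinearMap.sub_apply, Module.End.one_apply,
        neg_sub]
    have h2 : ∑ j ∈ Finset.range p, g j = 0 := by
      simp only [g]
      rw [← Finset.mul_sum]
      have h3 : ∑ j ∈ Finset.range p, (pull K e ^ (p - j)) f = 0 := by
        rw [← Finset.sum_range_reflect]
        have h4 : ∀ j ∈ Finset.range p, (pull K e ^ (p - (p - 1 - j))) f =
            pull K e ((pull K e ^ j) f) := by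
          intro j hj
          have := Finset.mem_range.1 hj
          rw [← Module.End.mul_apply, ← pow_succ']
          congr 2
          omega
        rw [Finset.sum_congr rfl h4, ← map_sum, ← LinearMap.sum_apply, hNf, map_zero]
      rw [h3, mul_zero]
    rw [h1, Finset.sum_sub_distrib, h2, sub_zero]
    ext c
    rw [Pi.add_apply, Finset.sum_apply]
    have h5 : ∀ j ∈ Finset.range p, (pull K e ^ j) (g j) c =
        R ((permFinset e ^ j) c) * f c := by
      intro j hj
      have := Finset.mem_range.1 hj
      rw [pull_pow_apply]
      change R ((permFinset e ^ j) c) * (pull K e ^ (p - j)) f ((permFinset e ^ j) c) = _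
      rw [← pull_pow_apply e j ((pull K e ^ (p - j)) f), ← Module.End.mul_apply, ← pow_add,
        show j + (p - j) = p by omega, pull_pow_eq_one he]
      rfl
    rw [Finset.sum_congr rfl h5, ← Finset.sum_mul]
    by_cases hc : permFinset e c = c
    · have h6 : ∀ j ∈ Finset.range p, R ((permFinset e ^ j) c) = R c := fun j _ => by
        rw [← pull_pow_apply e j R, pull_pow_apply_fixed _ _ hc]
      rw [Finset.sum_congr rfl h6, fixPart, if_pos hc]
      simp
    · rw [fixPart, if_neg hc, add_zero, hR c hc, one_mul]

/-- Smith's theorem: the fixed points of an automorphism of prime order `p` of an acyclic poset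
form an acyclic poset over fields of characteristic `p`. -/
theorem Acyclic.fixed (hA : Acyclic K S) (hS : ∀ a, e a ∈ S ↔ a ∈ S) (hp : p.Prime) [CharP K p]
    (he : ∀ a, e^[p] a = a) : Acyclic K {a ∈ S | e a = a} := by
  have H := smithPair_sub_sum (K := K) hS hp he
  have H' := smithPair_sum_sub (K := K) hS hp he
  intro z hz hdz
  have hzS : z ∈ chains K S := chains_mono (fun a ha => ha.1) hz
  have key : ∀ n, ∃ h ∈ chains K {a ∈ S | e a = a}, bdry K h = component n z := by
    intro n
    have hT : (1 - pull K e) (component n z) = 0 := by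
      ext c
      by_cases hc : permFinset e c = c
      · exact H'.apply_fixed _ _ hc
      · have h1 : component n z c = 0 :=
          component_mem n hz c fun h => hc (isChainIn_fixed_iff.1 h).2
        have h2 : component n z (permFinset e c) = 0 := component_mem n hz _ fun h =>
          hc ((permFinset e).injective (isChainIn_fixed_iff.1 h).2)
        simp [pull_apply, h1, h2]
    have hd : bdry K (component n z) = 0 := by
      cases n with
      | zero =>
        ext c
        rw [bdry_apply]
        refine Finset.sum_eq_zero fun a _ => ?_
        rw [component, if_neg (by simp), mul_zero]
      | succ n =>
        rw [bdry_component, hdz]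
        ext c
        simp [component]
    obtain ⟨v, hv, hTv, hdv⟩ := H.lift hA
      (H.exact H' hA (Fintype.card α + 1) (n + 1) (by omega)).1
      (component_mem n hzS) (component_homogeneous n z) hT hd
    obtain ⟨h, hh, hvh⟩ := H.decomp v hv hTv
    refine ⟨fixPart e v, fixPart_mem hv, ?_⟩
    set ρ' := ∑ j ∈ Finset.range p, pull K e ^ j
    have hcomm : ∀ f, ρ' (bdry K f) = bdry K (ρ' f) := fun f => LinearMap.congr_fun H.comm'.eq f
    have h1 : component n z - bdry K (fixPart e v) = ρ' (bdry K h) := by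
      rw [← hdv, hcomm, ← map_sub, sub_eq_of_eq_add hvh]
    symm
    rw [← sub_eq_zero]
    ext c
    by_cases hc : permFinset e c = c
    · rw [h1, H.apply_fixed _ _ hc]; rfl
    · exact sub_mem (component_mem n hz) (bdry_mem (fixPart_mem hv)) c
        fun h => hc (isChainIn_fixed_iff.1 h).2
  choose h hh hdh using key
  refine ⟨∑ n ∈ Finset.range (Fintype.card α + 1), h n, sum_mem fun n _ => hh n, ?_⟩
  rw [map_sum, Finset.sum_congr rfl fun n _ => hdh n, sum_component]

end operators
end smith
end OrderComplex

namespace OrderComplex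

set_option linter.unusedSectionVars false

variable {α : Type} [PartialOrder α] [Fintype α] [DecidableEq α]

lemma Acyclic.fixed_family {K : Type} [Field K] {S : Set α} {ι : Type} {t : ι → α ≃o α} {p : ℕ}
    (hA : Acyclic K S) (hS : ∀ i a, t i a ∈ S ↔ a ∈ S) (hp : p.Prime) [CharP K p]
    (ht : ∀ i a, (t i)^[p] a = a) (hcomm : ∀ i j a, t i (t j a) = t j (t i a)) (F : Finset ι) :
    Acyclic K {a ∈ S | ∀ i ∈ F, t i a = a} := by
  classical
  induction F using Finset.induction_on with
  | empty => simpa using hA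
  | insert i F hi ih =>
    have := ih.fixed (e := t i) (p := p) (fun a => ?_) hp (ht i)
    · convert this using 1
      ext a
      simp only [Finset.mem_insert, forall_eq_or_imp, Set.mem_ofPred_eq]
      tauto
    · simp only [Set.mem_ofPred_eq, hS]
      refine and_congr_right fun _ => forall₂_congr fun j _ => ?_
      rw [hcomm j i]
      exact (t i).injective.eq_iff

section lefschetz

variable {S : Set α}

open scoped Classical in
/-- Extension by zero of a function on the chains of `S`. -/
noncomputable def extend {R : Type} [CommRing R] (S : Set α) :
    ({c : Finset α // IsChainIn S c} → R) →ₗ[R] (Finset α → R) where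
  toFun f c := if h : IsChainIn S c then f ⟨c, h⟩ else 0
  map_add' f g := by
    ext c
    by_cases h : IsChainIn S c <;> simp [h]
  map_smul' r f := by
    ext c
    by_cases h : IsChainIn S c <;> simp [h]

lemma extend_apply {R : Type} [CommRing R] (f : {c : Finset α // IsChainIn S c} → R)
    (c : {c : Finset α // IsChainIn S c}) : extend S f c = f c := by
  simp [extend, c.2]

lemma extend_mem {R : Type} [CommRing R] (f : {c : Finset α // IsChainIn S c} → R) :
    extend S f ∈ chains R S := fun c hc => by simp [extend, hc]

lemma extend_restrict {R : Type} [CommRing R] {f : Finset α → R} (hf : f ∈ chains R S) :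
    extend S (fun c => f c.1) = f := by
  ext c
  by_cases h : IsChainIn S c
  · simp [extend, h]
  · simp [extend, h, hf c h]

/-- The boundary operator of the order complex of `S`, in coordinates. -/
noncomputable def bdryOn (R : Type) [CommRing R] (S : Set α) :
    ({c : Finset α // IsChainIn S c} → R) →ₗ[R] ({c : Finset α // IsChainIn S c} → R) :=
  LinearMap.funLeft R R Subtype.val ∘ₗ bdry R ∘ₗ extend S

lemma extend_bdryOn {R : Type} [CommRing R] (f : {c : Finset α // IsChainIn S c} → R) :
    extend S (bdryOn R S f) = bdry R (extend S f) :=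
  extend_restrict (bdry_mem (extend_mem f))

lemma extend_injective {R : Type} [CommRing R] :
    Function.Injective (extend (R := R) S) := fun f g h => by
  ext c
  rw [← extend_apply f c, h, extend_apply]

lemma bdryOn_bdryOn {R : Type} [CommRing R] (f : {c : Finset α // IsChainIn S c} → R) :
    bdryOn R S (bdryOn R S f) = 0 := by
  apply extend_injective
  rw [extend_bdryOn, extend_bdryOn, bdry_bdry (extend_mem f), map_zero]

/-- A linear endomorphism of a vector space with a generalized inverse. -/
lemma exists_generalized_inverse {K V : Type} [Field K] [AddCommGroup V] [Module K V]
    (d : V →ₗ[K] V) : ∃ s : V →ₗ[K] V, ∀ x, d (s (d x)) = d x := by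
  obtain ⟨r, hr⟩ := d.rangeRestrict.exists_rightInverse_of_surjective d.range_rangeRestrict
  obtain ⟨s, hs⟩ := r.exists_extend
  refine ⟨s, fun x => ?_⟩
  have h1 : s (d x) = r (d.rangeRestrict x) := LinearMap.congr_fun hs (d.rangeRestrict x)
  rw [h1]
  exact congrArg Subtype.val (LinearMap.congr_fun hr (d.rangeRestrict x))

open Matrix in
/-- An integral differential that is exact modulo a prime has a contracting homotopy over `ℚ`. -/
lemma exists_rational_contraction {I : Type} [Fintype I] [DecidableEq I] {p : ℕ} [Fact p.Prime]
    (D : Matrix I I ℤ) (hD : D * D = 0)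
    (hex : ∀ x : I → ZMod p, (D.map (Int.castRingHom (ZMod p))) *ᵥ x = 0 →
      ∃ y, (D.map (Int.castRingHom (ZMod p))) *ᵥ y = x) :
    ∃ h : Matrix I I ℚ, (D.map (Int.castRingHom ℚ)) * h + h * (D.map (Int.castRingHom ℚ)) = 1 := by
  set φ := Int.castRingHom (ZMod p)
  set ψ := Int.castRingHom ℚ
  set d := D.map φ with hd
  have hdd : d * d = 0 := by rw [hd, ← Matrix.map_mul, hD]; simp
  obtain ⟨s, hs⟩ := exists_generalized_inverse (Matrix.mulVecLin d)
  set σ := LinearMap.toMatrix' s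
  have hσ : ∀ x, d *ᵥ (σ *ᵥ (d *ᵥ x)) = d *ᵥ x := fun x => by
    rw [LinearMap.toMatrix'_mulVec]
    exact hs x
  set u := d * σ + σ * d with hu
  have hu1 : (u - 1) * (u - 1) = 0 := by
    apply Matrix.toLin'.injective
    ext1 i
    refine LinearMap.ext fun a => ?_
    simp only [LinearMap.comp_apply, toLin'_apply, map_zero, LinearMap.zero_apply]
    rw [← mulVec_mulVec]
    set x := LinearMap.single (ZMod p) (fun _ : I => ZMod p) i a
    have h1 : d *ᵥ ((u - 1) *ᵥ x) = 0 := by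
      rw [hu, sub_mulVec, add_mulVec, mulVec_sub, mulVec_add, ← mulVec_mulVec, ← mulVec_mulVec,
        mulVec_mulVec _ d d, hdd, hσ]
      simp
    obtain ⟨y, hy⟩ := hex _ h1
    rw [← hy, hu, sub_mulVec, add_mulVec, ← mulVec_mulVec, ← mulVec_mulVec, hσ,
      mulVec_mulVec _ d d, hdd]
    simp
  have hudet : u.det ≠ 0 := by
    have h2 : u * (2 - u) = 1 := by
      have : u * (2 - u) = 1 - (u - 1) * (u - 1) := by noncomm_ring
      rw [this, hu1, sub_zero]
    intro h0
    have := congrArg Matrix.det h2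
    rw [Matrix.det_mul, h0, zero_mul, Matrix.det_one] at this
    exact zero_ne_one this
  have hsurj : Function.Surjective φ := ZMod.intCast_surjective
  choose lift hlift using hsurj
  set σ' := σ.map lift
  have hσ' : σ'.map φ = σ := by ext i j; simp [σ', hlift]
  set w := D * σ' + σ' * D with hw
  have hwu : w.map φ = u := by
    rw [hw, Matrix.map_add _ (map_add φ), Matrix.map_mul, Matrix.map_mul, hσ']
  have hwdet : w.det ≠ 0 := by
    intro h0
    apply hudet
    rw [← hwu, ← RingHom.mapMatrix_apply, ← RingHom.map_det, h0, map_zero]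
  set W := w.map ψ with hW
  set E := D.map ψ with hE
  have hWE : W = E * σ'.map ψ + σ'.map ψ * E := by
    rw [hW, hw, Matrix.map_add _ (map_add ψ), Matrix.map_mul, Matrix.map_mul]
  have hEE : E * E = 0 := by rw [hE, ← Matrix.map_mul, hD]; simp
  have hWdet : IsUnit W.det := by
    rw [hW, ← RingHom.mapMatrix_apply, ← RingHom.map_det, isUnit_iff_ne_zero]
    simpa [ψ] using hwdet
  have hcomm : E * W = W * E := by
    rw [hWE, mul_add, add_mul, ← mul_assoc, hEE, mul_assoc, mul_assoc, hEE]; simp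
  have hcomm' : E * W⁻¹ = W⁻¹ * E := by
    have h3 : W⁻¹ * (E * W) * W⁻¹ = W⁻¹ * (W * E) * W⁻¹ := by rw [hcomm]
    rw [← mul_assoc, mul_assoc _ W W⁻¹, Matrix.mul_nonsing_inv _ hWdet, mul_one, ← mul_assoc,
      Matrix.nonsing_inv_mul _ hWdet, one_mul] at h3
    exact h3.symm
  refine ⟨W⁻¹ * σ'.map ψ, ?_⟩
  rw [← mul_assoc, hcomm', mul_assoc, mul_assoc, ← mul_add, ← hWE, Matrix.nonsing_inv_mul _ hWdet]

open scoped Classical in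
/-- The alternating number of chains of `S`, the empty chain included: up to sign the reduced
Euler characteristic of the order complex. -/
noncomputable def altSum (S : Set α) : ℤ :=
  ∑ c : Finset α with IsChainIn S c, (-1) ^ c.card

open Matrix in
/-- Lefschetz fixed point formula for an automorphism of a poset acyclic over a prime field. -/
theorem Acyclic.altSum_fixed {p : ℕ} [Fact p.Prime] (hA : Acyclic (ZMod p) S) {e : α ≃o α}
    (hS : ∀ a, e a ∈ S ↔ a ∈ S) : altSum {a ∈ S | e a = a} = 0 := by
  classical
  let I := {c : Finset α // IsChainIn S c}
  have hmap : ∀ (R : Type) [CommRing R], (LinearMap.toMatrix' (bdryOn ℤ S)).map (Int.castRingHom R)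
      = LinearMap.toMatrix' (bdryOn R S) := by
    intro R _
    ext c c'
    simp only [Matrix.map_apply, LinearMap.toMatrix'_apply]
    change (Int.castRingHom R) (bdry ℤ (extend S (Pi.single c' 1)) c) =
      bdry R (extend S (Pi.single c' 1)) c
    rw [bdry_apply, bdry_apply, map_sum]
    refine Finset.sum_congr rfl fun a _ => ?_
    rw [map_mul]
    congr 1
    · simp [sgn]
    · by_cases h : IsChainIn S (Insert.insert a c.1)
      · simp only [extend, LinearMap.coe_mk, AddHom.coe_mk, h, dif_pos, Pi.single_apply]
        split_ifs <;> simp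
      · simp [extend, h]
  have hmv : ∀ (R : Type) [CommRing R] (x : I → R),
      (LinearMap.toMatrix' (bdryOn R S)) *ᵥ x = bdryOn R S x := fun R _ x =>
    LinearMap.toMatrix'_mulVec _ _
  have hDD : LinearMap.toMatrix' (bdryOn ℤ S) * LinearMap.toMatrix' (bdryOn ℤ S) = 0 := by
    rw [← LinearMap.toMatrix'_comp]
    have : bdryOn ℤ S ∘ₗ bdryOn ℤ S = 0 := LinearMap.ext fun f => bdryOn_bdryOn f
    rw [this, map_zero]
  obtain ⟨h, hh⟩ := exists_rational_contraction (p := p) _ hDD (by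
    intro x hx
    rw [hmap, hmv] at hx
    have h0 : bdry (ZMod p) (extend S x) = 0 := by rw [← extend_bdryOn, hx, map_zero]
    obtain ⟨y, hy, hdy⟩ := hA _ (extend_mem x) h0
    refine ⟨fun c => y c.1, ?_⟩
    rw [hmap, hmv]
    apply extend_injective
    rw [extend_bdryOn, extend_restrict hy, hdy])
  rw [hmap] at hh
  set D := LinearMap.toMatrix' (bdryOn ℚ S)
  let P : Matrix I I ℚ := LinearMap.toMatrix' (LinearMap.funLeft ℚ ℚ
    (fun c : I => (⟨permFinset e c.1, (isChainIn_permFinset hS).2 c.2⟩ : I)))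
  have hPD : P * D = D * P := by
    simp only [P, D]
    rw [← LinearMap.toMatrix'_comp, ← LinearMap.toMatrix'_comp]
    congr 1
    refine LinearMap.ext fun f => ?_
    have hpull : ∀ g : I → ℚ, extend S (fun c : I =>
        g ⟨permFinset e c.1, (isChainIn_permFinset hS).2 c.2⟩) = pull ℚ e (extend S g) := by
      intro g
      ext c
      by_cases hc : IsChainIn S c
      · simp [extend, hc, pull_apply, isChainIn_permFinset hS]
      · simp [extend, hc, pull_apply, isChainIn_permFinset hS]
    apply extend_injective
    change extend S (fun c : I => bdryOn ℚ S f ⟨permFinset e c.1, _⟩) =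
      extend S (bdryOn ℚ S (fun c : I => f ⟨permFinset e c.1, _⟩))
    rw [hpull, extend_bdryOn, extend_bdryOn, hpull]
    exact LinearMap.congr_fun (pull_bdry (K := ℚ) e).eq _
  let ε : Matrix I I ℚ := Matrix.diagonal fun c => (-1) ^ c.1.card
  have hεD : ε * D = - (D * ε) := by
    ext c c'
    simp only [ε, Matrix.neg_apply, Matrix.diagonal_mul, Matrix.mul_diagonal, D,
      LinearMap.toMatrix'_apply]
    change _ * bdry ℚ (extend S (Pi.single c' 1)) c =
      - (bdry ℚ (extend S (Pi.single c' 1)) c * _)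
    rw [bdry_apply, Finset.mul_sum, Finset.sum_mul, ← Finset.sum_neg_distrib]
    refine Finset.sum_congr rfl fun a ha => ?_
    by_cases hc : IsChainIn S (Insert.insert a c.1)
    · by_cases hcc : (⟨Insert.insert a c.1, hc⟩ : I) = c'
      · have : c'.1.card = c.1.card + 1 := by
          rw [← hcc, Finset.card_insert_of_notMem (by simpa using ha)]
        rw [this, pow_succ]; ring
      · simp [extend, hc, hcc]
    · simp [extend, hc]
  have htr : Matrix.trace (ε * P) = 0 := by
    have h1 : ε * P = ε * P * D * h + ε * P * h * D := by
      rw [mul_assoc _ D h, mul_assoc _ h D, ← mul_add, hh, mul_one]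
    rw [h1, Matrix.trace_add, Matrix.trace_mul_comm (ε * P * h) D, mul_assoc ε P D, hPD,
      ← mul_assoc, hεD]
    simp [mul_assoc]
  have hdiag : Matrix.trace (ε * P) =
      ∑ c : I, if permFinset e c.1 = c.1 then (-1 : ℚ) ^ c.1.card else 0 := by
    rw [Matrix.trace]
    refine Finset.sum_congr rfl fun c _ => ?_
    simp only [ε, P, Matrix.diag_apply, Matrix.diagonal_mul, LinearMap.toMatrix'_apply]
    change _ * (Pi.single c (1 : ℚ) : I → ℚ) (⟨permFinset e c.1, _⟩ : I) = _
    have hiff : (⟨permFinset e c.1, (isChainIn_permFinset hS).2 c.2⟩ : I) = c ↔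
        permFinset e c.1 = c.1 := Subtype.ext_iff
    simp [Pi.single_apply, hiff]
  rw [hdiag] at htr
  have hfin : ((altSum {a ∈ S | e a = a} : ℤ) : ℚ) = 0 := by
    rw [← htr, altSum]
    push_cast
    rw [← Finset.sum_filter]
    refine Finset.sum_bij' (fun c hc => ⟨c, ?_⟩) (fun c _ => c.1) ?_ ?_ ?_ ?_ ?_
    · exact (isChainIn_fixed_iff.1 (Finset.mem_filter.1 hc).2).1
    · intro c hc
      simpa using (isChainIn_fixed_iff.1 (Finset.mem_filter.1 hc).2).2
    · intro c hc
      simpa using isChainIn_fixed_iff.2 ⟨c.2, (Finset.mem_filter.1 hc).2⟩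
    all_goals intros; rfl
  exact_mod_cast hfin

end lefschetz
end OrderComplex

namespace OrderComplex

set_option linter.unusedSectionVars false

variable {α : Type} [PartialOrder α] [Fintype α] [DecidableEq α]

lemma card_filter_modEq_card_fixed {X : Type} [Fintype X] [DecidableEq X] {q : ℕ} (hq : q.Prime)
    (π : Equiv.Perm X) (hπ : π ^ q = 1) (Q : X → Prop) [DecidablePred Q]
    (hQ : ∀ c, Q (π c) ↔ Q c) :
    (Finset.univ.filter Q).card ≡ (Finset.univ.filter fun c => Q c ∧ π c = c).card [MOD q] := by
  classical
  have := Fact.mk hq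
  let π' : Equiv.Perm {c // Q c} := π.subtypePerm hQ
  have h1 : π' ^ (q ^ 1) = 1 := by
    rw [pow_one]
    ext c
    simp [π', Equiv.Perm.subtypePerm_pow, hπ]
  let f : Function.End {c // Q c} := ⇑π'
  have hf : ∀ j : ℕ, f ^ j = ⇑(π' ^ j) := by
    intro j
    induction j with
    | zero => rfl
    | succ j ih => rw [pow_succ, pow_succ, ih]; rfl
  have h2 := Equiv.Perm.card_fixedPoints_modEq (f := f) (p := q) (n := 1)
    (by rw [hf, h1]; rfl)
  have e1 : Fintype.card {c // Q c} = (Finset.univ.filter Q).card := Fintype.card_subtype Q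
  have e2 : Fintype.card (Function.fixedPoints f) =
      (Finset.univ.filter fun c => Q c ∧ π c = c).card := by
    rw [← Fintype.card_subtype]
    refine Fintype.card_congr ⟨fun c => ⟨c.1.1, c.1.2, congrArg Subtype.val c.2⟩,
      fun c => ⟨⟨c.1, c.2.1⟩, Subtype.ext c.2.2⟩, fun _ => rfl, fun _ => rfl⟩
  rwa [e1, e2] at h2

lemma altSum_eq_sub (S : Set α) [DecidablePred (IsChainIn S)] : altSum S =
    ((Finset.univ.filter fun c : Finset α => IsChainIn S c ∧ Even c.card).card : ℤ) -
    ((Finset.univ.filter fun c : Finset α => IsChainIn S c ∧ ¬ Even c.card).card : ℤ) := by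
  classical
  rw [altSum, ← Finset.filter_filter, ← Finset.filter_filter, Finset.card_filter,
    Finset.card_filter]
  push_cast
  rw [← Finset.sum_sub_distrib]
  refine Finset.sum_congr (by congr) fun c _ => ?_
  by_cases h : Even c.card
  · simp [h]
  · simp [h, (Nat.not_even_iff_odd.1 h).neg_one_pow]

/-- The Euler characteristic modulo `q` is unchanged on passing to the fixed points of an
automorphism of order `q`. -/
lemma altSum_modEq_fixed {S : Set α} {e : α ≃o α} {q : ℕ} (hq : q.Prime)
    (hS : ∀ a, e a ∈ S ↔ a ∈ S) (he : ∀ a, e^[q] a = a) :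
    altSum S ≡ altSum {a ∈ S | e a = a} [ZMOD q] := by
  classical
  have hπ : permFinset e ^ q = 1 := permFinset_pow e he
  have hcard : ∀ c, (permFinset e c).card = c.card := fun c => by simp [permFinset]
  rw [altSum_eq_sub, altSum_eq_sub]
  have key : ∀ R : ℕ → Prop, [DecidablePred R] →
      ((Finset.univ.filter fun c : Finset α => IsChainIn S c ∧ R c.card).card : ℤ) ≡
      ((Finset.univ.filter fun c : Finset α =>
        IsChainIn {a ∈ S | e a = a} c ∧ R c.card).card : ℤ) [ZMOD q] := by
    intro R _
    rw [Int.natCast_modEq_iff]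
    convert card_filter_modEq_card_fixed hq (permFinset e) hπ
      (fun c => IsChainIn S c ∧ R c.card) ?_ using 3
    · rw [isChainIn_fixed_iff]
      tauto
    · intro c
      simp only [hcard, isChainIn_permFinset hS]
  exact (key _).sub (key fun m => ¬ Even m)

lemma altSum_empty : altSum (∅ : Set α) = 1 := by
  classical
  have : (Finset.univ.filter fun c : Finset α => IsChainIn (∅ : Set α) c) = {∅} := by
    ext c
    simp only [Finset.mem_filter, Finset.mem_univ, true_and, Finset.mem_singleton]
    constructor
    · intro h
      refine Finset.eq_empty_of_forall_notMem fun a ha => h.1 a ha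
    · rintro rfl
      simp [IsChainIn]
  rw [altSum]
  trans ∑ c ∈ {∅}, (-1 : ℤ) ^ (c : Finset α).card
  · refine Finset.sum_congr ?_ fun _ _ => rfl
    rw [← this]
  · simp

end OrderComplex

namespace OrderComplex

set_option linter.unusedSectionVars false

section conical

variable {ι : Type} [Fintype ι] [DecidableEq ι] {K : Type} [CommRing K]

lemma le_update_true (x : ι → Bool) (i : ι) : x ≤ Function.update x i true := by
  intro j
  by_cases h : j = i
  · subst h; simp
  · simp [h]

lemma update_true_le {x y : ι → Bool} {i : ι} (hxy : x ≤ y) (hy : y i = true) :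
    Function.update x i true ≤ y := by
  intro j
  by_cases h : j = i
  · subst h; simp [hy]
  · simpa [h] using hxy j

/-- A lower set all of whose members can be enlarged by `i` is acyclic. -/
lemma acyclic_of_conical {Δ : Set (ι → Bool)} {i : ι}
    (hi : Function.update ⊥ i true ∈ Δ) :
    Acyclic K {x ∈ Δ | x ≠ ⊥ ∧ Function.update x i true ∈ Δ} := by
  classical
  have key : ∀ Z : Finset (ι → Bool),
      (∀ x ∈ Z, x i = false ∧ Function.update x i true ∈ Δ) →
      Acyclic K ({x ∈ Δ | x i = true} ∪ (Z : Set (ι → Bool))) := by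
    intro Z
    induction Z using Finset.strongInduction with
    | H Z ih =>
      intro hZ
      rcases Z.eq_empty_or_nonempty with rfl | hne
      · rw [Finset.coe_empty, Set.union_empty]
        exact acyclic_of_comparable (e := Function.update ⊥ i true) ⟨hi, by simp⟩
          fun a ha => Or.inr (update_true_le bot_le ha.2)
      · obtain ⟨a, ha⟩ := Z.exists_maximal hne
        have hIH := ih (Z.erase a) (Finset.erase_ssubset ha.1)
          fun x hx => hZ x (Finset.mem_of_mem_erase hx)
        have hins : ({x ∈ Δ | x i = true} ∪ (Z : Set (ι → Bool))) =
            Insert.insert a ({x ∈ Δ | x i = true} ∪ ((Z.erase a : Finset _) : Set (ι → Bool))) := by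
          rw [← Set.union_insert, ← Finset.coe_insert, Finset.insert_erase ha.1]
        rw [hins]
        refine hIH.insert ?_ (acyclic_of_comparable (e := Function.update a i true) ?_ ?_)
        · rintro (h | h)
          · simp [(hZ a ha.1).1] at h
          · simp at h
        · exact ⟨Or.inl ⟨(hZ a ha.1).2, by simp⟩, Or.inr (le_update_true a i)⟩
        · rintro b ⟨hb, hba | hab⟩
          · exact Or.inl (hba.trans (le_update_true a i))
          · rcases hb with hb | hb
            · exact Or.inr (update_true_le hab hb.2)
            · rw [Finset.mem_coe, Finset.mem_erase] at hb
              exact absurd (le_antisymm (ha.2 hb.2 hab) hab) hb.1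
  convert key (Finset.univ.filter fun x => x ∈ Δ ∧ x ≠ ⊥ ∧ Function.update x i true ∈ Δ ∧
    x i = false) (by simp +contextual) using 1
  ext x
  simp only [Set.mem_ofPred_eq, Set.mem_union, Finset.coe_filter, Finset.mem_univ, true_and]
  cases hx : x i
  · simp
  · have h1 : Function.update x i true = x := by rw [← hx]; simp
    have h2 : x ≠ ⊥ := by rintro rfl; simp at hx
    simp [h1, h2]

/-- A lower set is acyclic if the deletion and the link of `i` are. -/
lemma acyclic_of_deletion_of_link {Δ : Set (ι → Bool)} (hΔ : IsLowerSet Δ) {i : ι}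
    (hi : Function.update ⊥ i true ∈ Δ)
    (hD : Acyclic K {x ∈ Δ | x ≠ ⊥ ∧ x i = false})
    (hL : Acyclic K {x | x ≠ ⊥ ∧ x i = false ∧ Function.update x i true ∈ Δ}) :
    Acyclic K {x ∈ Δ | x ≠ ⊥} := by
  have hu : {x ∈ Δ | x ≠ ⊥} = {x ∈ Δ | x ≠ ⊥ ∧ x i = false} ∪
      {x ∈ Δ | x ≠ ⊥ ∧ Function.update x i true ∈ Δ} := by
    ext x
    simp only [Set.mem_ofPred_eq, Set.mem_union]
    cases hx : x i
    · simp; tauto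
    · have h1 : Function.update x i true = x := by rw [← hx]; simp
      simp [h1]; tauto
  rw [hu]
  refine hD.union (acyclic_of_conical hi) ?_ ?_
  · convert hL using 1
    ext x
    simp only [Set.mem_ofPred_eq, Set.mem_inter_iff]
    have : Function.update x i true ∈ Δ → x ∈ Δ := fun h => hΔ (le_update_true x i) h
    tauto
  · intro c hc
    by_cases hW : ∀ x ∈ c, Function.update x i true ∈ Δ
    · refine Or.inr ⟨fun x hx => ?_, hc.2⟩
      have := hc.1 x hx
      rw [← hu] at this
      exact ⟨this.1, this.2, hW x hx⟩
    · push Not at hW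
      obtain ⟨x, hx, hxΔ⟩ := hW
      refine Or.inl ⟨fun y hy => ?_, hc.2⟩
      have := hc.1 y hy
      rw [← hu] at this
      refine ⟨this.1, this.2, ?_⟩
      by_contra hyi
      rw [Bool.not_eq_false] at hyi
      have hxi : x i = false := by
        by_contra hxi
        rw [Bool.not_eq_false] at hxi
        apply hxΔ
        have h1 : Function.update x i true = x := by rw [← hxi]; simp
        have := hc.1 x hx
        rw [← hu] at this
        rw [h1]
        exact this.1
      have hne : x ≠ y := by rintro rfl; simp [hxi] at hyi
      rcases hc.2 hx hy hne with h | h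
      · exact hxΔ (hΔ (update_true_le h hyi) this.1)
      · have hle := h i
        rw [hxi, hyi] at hle
        exact absurd (show true = false from le_bot_iff.1 hle) (by simp)

lemma acyclic_of_tree (T : DecisionTree ι) : ∀ (X : Finset ι) (m : ι → Bool),
    (∀ i ∈ X, m i = false) → T.depth < X.card →
    IsLowerSet {x : ι → Bool | (∀ i ∉ X, x i = false) ∧ T.eval (x ⊔ m) = true} →
    T.eval m = true →
    Acyclic K {x ∈ {x : ι → Bool | (∀ i ∉ X, x i = false) ∧ T.eval (x ⊔ m) = true} | x ≠ ⊥} := by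
  induction T with
  | leaf v =>
    intro X m _ hd _ hm
    have hv : v = true := hm
    subst hv
    obtain ⟨i, hi⟩ : X.Nonempty := Finset.card_pos.1 (by simpa [DecisionTree.depth] using hd)
    refine acyclic_of_comparable (e := fun j => decide (j ∈ X)) ⟨⟨by simp, rfl⟩, ?_⟩ ?_
    · intro h
      have := congrFun h i
      simp [hi] at this
    · intro a ha
      left
      intro j
      by_cases hj : j ∈ X
      · simp [hj]
      · simp [hj, ha.1.1 j hj]
  | node i t f iht ihf =>
    intro X m hmX hd hlow hm
    have hdt : t.depth + 1 ≤ max t.depth f.depth + 1 := by omega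
    have hdf : f.depth + 1 ≤ max t.depth f.depth + 1 := by omega
    simp only [DecisionTree.depth] at hd
    by_cases hiX : i ∈ X
    · have hcard := Finset.card_erase_of_mem hiX
      have hmi := hmX i hiX
      have hsup : ∀ x : ι → Bool, (∀ j ∉ X.erase i, x j = false) ↔
          (∀ j ∉ X, x j = false) ∧ x i = false := by
        intro x
        constructor
        · exact fun h => ⟨fun j hj => h j (by simp [hj]), h i (by simp)⟩
        · rintro ⟨h1, h2⟩ j hj
          by_cases hji : j = i
          · rw [hji, h2]
          · exact h1 j (by simpa [hji] using hj)
      have hevf : ∀ x : ι → Bool, x i = false →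
          (DecisionTree.node i t f).eval (x ⊔ m) = f.eval (x ⊔ m) := by
        intro x hx
        simp [DecisionTree.eval, hx, hmi]
      have hevt : ∀ x : ι → Bool, (DecisionTree.node i t f).eval (Function.update x i true ⊔ m) =
          t.eval (x ⊔ Function.update m i true) := by
        intro x
        have : Function.update x i true ⊔ m = x ⊔ Function.update m i true := by
          ext j
          by_cases hj : j = i
          · subst hj; simp
          · simp [hj]
        rw [← this]
        simp [DecisionTree.eval]
      have hD : {x : ι → Bool | (∀ j ∉ X.erase i, x j = false) ∧ f.eval (x ⊔ m) = true} =
          {x ∈ {x : ι → Bool | (∀ j ∉ X, x j = false) ∧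
            (DecisionTree.node i t f).eval (x ⊔ m) = true} | x i = false} := by
        ext x
        simp only [Set.mem_ofPred_eq, hsup]
        constructor
        · rintro ⟨⟨h1, h2⟩, h3⟩
          exact ⟨⟨h1, by rw [hevf x h2, h3]⟩, h2⟩
        · rintro ⟨⟨h1, h3⟩, h2⟩
          exact ⟨⟨h1, h2⟩, by rw [← hevf x h2, h3]⟩
      have hAD := ihf (X.erase i) m (fun j hj => hmX j (Finset.mem_of_mem_erase hj)) (by omega)
        (by
          rw [hD]
          rintro x y hyx ⟨h1, h2⟩
          refine ⟨hlow hyx h1, ?_⟩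
          have := hyx i
          rw [h2] at this
          exact le_bot_iff.1 this)
        (by
          have := hevf ⊥ rfl
          rw [bot_sup_eq] at this
          rw [← this, hm])
      by_cases hi : Function.update ⊥ i true ∈ {x : ι → Bool | (∀ j ∉ X, x j = false) ∧
            (DecisionTree.node i t f).eval (x ⊔ m) = true}
      · have hL : {x : ι → Bool | (∀ j ∉ X.erase i, x j = false) ∧
            t.eval (x ⊔ Function.update m i true) = true} =
          {x : ι → Bool | x i = false ∧ Function.update x i true ∈
            {x : ι → Bool | (∀ j ∉ X, x j = false) ∧
            (DecisionTree.node i t f).eval (x ⊔ m) = true}} := by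
          ext x
          simp only [Set.mem_ofPred_eq, hsup, hevt]
          have : (∀ j ∉ X, Function.update x i true j = false) ↔ ∀ j ∉ X, x j = false := by
            refine forall₂_congr fun j hj => ?_
            have : j ≠ i := by rintro rfl; exact hj hiX
            simp [this]
          rw [this]
          tauto
        have hAL := iht (X.erase i) (Function.update m i true) (fun j hj => by
            rw [Function.update_of_ne (Finset.ne_of_mem_erase hj)]
            exact hmX j (Finset.mem_of_mem_erase hj)) (by omega)
          (by
            rw [hL]
            rintro x y hyx ⟨h1, h2⟩
            refine ⟨?_, hlow (update_true_le (hyx.trans (le_update_true x i)) (by simp)) h2⟩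
            have := hyx i
            rw [h1] at this
            exact le_bot_iff.1 this)
          (by
            have := hi.2
            rwa [hevt, bot_sup_eq] at this)
        refine acyclic_of_deletion_of_link hlow hi ?_ ?_
        · rw [hD] at hAD
          convert hAD using 1
          ext x
          simp only [Set.mem_ofPred_eq]
          tauto
        · rw [hL] at hAL
          convert hAL using 1
          ext x
          simp only [Set.mem_ofPred_eq]
          tauto
      · rw [hD] at hAD
        convert hAD using 1
        ext x
        have : x ∈ {x : ι → Bool | (∀ j ∉ X, x j = false) ∧
            (DecisionTree.node i t f).eval (x ⊔ m) = true} → x i = false := by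
          intro hx
          by_contra hxi
          rw [Bool.not_eq_false] at hxi
          exact hi (hlow (update_true_le bot_le hxi) hx)
        simp only [Set.mem_ofPred_eq] at this ⊢
        tauto
    · cases hmi : m i
      · have hev : ∀ x : ι → Bool, (∀ j ∉ X, x j = false) →
            (DecisionTree.node i t f).eval (x ⊔ m) = f.eval (x ⊔ m) := by
          intro x hx
          simp [DecisionTree.eval, hmi, hx i hiX]
        have hS : {x : ι → Bool | (∀ j ∉ X, x j = false) ∧
            (DecisionTree.node i t f).eval (x ⊔ m) = true} =
            {x : ι → Bool | (∀ j ∉ X, x j = false) ∧ f.eval (x ⊔ m) = true} := by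
          ext x
          exact and_congr_right fun hx => by rw [hev x hx]
        rw [hS] at hlow ⊢
        refine ihf X m hmX (by omega) hlow ?_
        simpa [DecisionTree.eval, hmi] using hm
      · have hev : ∀ x : ι → Bool, (∀ j ∉ X, x j = false) →
            (DecisionTree.node i t f).eval (x ⊔ m) = t.eval (x ⊔ m) := by
          intro x hx
          simp [DecisionTree.eval, hmi]
        have hS : {x : ι → Bool | (∀ j ∉ X, x j = false) ∧
            (DecisionTree.node i t f).eval (x ⊔ m) = true} =
            {x : ι → Bool | (∀ j ∉ X, x j = false) ∧ t.eval (x ⊔ m) = true} := by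
          ext x
          exact and_congr_right fun hx => by rw [hev x hx]
        rw [hS] at hlow ⊢
        refine iht X m hmX (by omega) hlow ?_
        simpa [DecisionTree.eval, hmi] using hm

/-- A lower set decided by a tree that never queries all the variables is acyclic. -/
theorem acyclic_of_depth_lt {Δ : Set (ι → Bool)} (hΔ : IsLowerSet Δ) (hbot : ⊥ ∈ Δ)
    (T : DecisionTree ι) (hT : ∀ x, T.eval x = true ↔ x ∈ Δ) (hd : T.depth < Fintype.card ι) :
    Acyclic K {x ∈ Δ | x ≠ ⊥} := by
  have h : {x : ι → Bool | (∀ i ∉ (Finset.univ : Finset ι), x i = false) ∧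
      T.eval (x ⊔ ⊥) = true} = Δ := by
    ext x
    simp [hT]
  have := acyclic_of_tree (K := K) T Finset.univ ⊥ (fun _ _ => rfl) hd (by rwa [h])
    ((hT _).2 hbot)
  rwa [h] at this

end conical
end OrderComplex

namespace OrderComplex

/-- Every Boolean function is computed by the tree that queries all the variables. -/
lemma exists_full_tree {ι : Type} [DecidableEq ι] (f : (ι → Bool) → Bool) (X : Finset ι) :
    ∀ m : ι → Bool, ∃ T : DecisionTree ι, T.depth ≤ X.card ∧
      ∀ x, (∀ i ∉ X, x i = m i) → T.eval x = f x := by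
  induction X using Finset.induction_on with
  | empty =>
    intro m
    refine ⟨.leaf (f m), by simp [DecisionTree.depth], fun x hx => ?_⟩
    have : x = m := funext fun i => hx i (by simp)
    rw [this, DecisionTree.eval]
  | insert i X hi ih =>
    intro m
    obtain ⟨T1, hd1, h1⟩ := ih (Function.update m i true)
    obtain ⟨T0, hd0, h0⟩ := ih (Function.update m i false)
    refine ⟨.node i T1 T0, ?_, fun x hx => ?_⟩
    · rw [Finset.card_insert_of_notMem hi, DecisionTree.depth]
      omega
    · have key : ∀ b, x i = b → ∀ j ∉ X, x j = Function.update m i b j := by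
        intro b hb j hj
        by_cases hji : j = i
        · subst hji; simp [hb]
        · rw [Function.update_of_ne hji]
          exact hx j (by simp [hji, hj])
      cases hxi : x i
      · simpa [DecisionTree.eval, hxi] using h0 x (key _ hxi)
      · simpa [DecisionTree.eval, hxi] using h1 x (key _ hxi)

instance instFintypeEdgeVar (n : ℕ) : Fintype (EdgeVar n) :=
  inferInstanceAs (Fintype {p : Fin n × Fin n // p.1 < p.2})

instance instDecidableEqEdgeVar (n : ℕ) : DecidableEq (EdgeVar n) :=
  inferInstanceAs (DecidableEq {p : Fin n × Fin n // p.1 < p.2})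

lemma card_edgeVar (n : ℕ) : Fintype.card (EdgeVar n) = n * (n - 1) / 2 := by
  have h : Fintype.card (EdgeVar n) =
      (Finset.univ.filter fun p : Fin n × Fin n => p.1 < p.2).card :=
    Fintype.card_subtype _
  rw [h, Finset.card_filter, Fintype.sum_prod_type_right]
  simp only [← Finset.card_filter]
  have h2 : ∀ j : Fin n, (Finset.univ.filter fun i : Fin n => i < j).card = (j : ℕ) := by
    intro j
    rw [← Fin.card_Iio]
    congr 1
    ext i
    simp
  simp only [h2]
  rw [Fin.sum_univ_eq_sum_range (fun i => i) n, Finset.sum_range_id]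

/-- A nonevasive property is computed by a tree that does not query all the variables. -/
lemma exists_tree_of_not_evasive {n : ℕ} {P : Set (SimpleGraph (Fin n))} (h : ¬ Evasive P) :
    ∃ T : DecisionTree (EdgeVar n), (∀ x, T.eval x = true ↔ graphOfInput x ∈ P) ∧
      T.depth < Fintype.card (EdgeVar n) := by
  classical
  have hmem : Fintype.card (EdgeVar n) ∈ {d | ∃ T : DecisionTree (EdgeVar n),
      (∀ x, T.eval x = true ↔ graphOfInput x ∈ P) ∧ T.depth ≤ d} := by
    obtain ⟨T, hd, hT⟩ := exists_full_tree (fun x => decide (graphOfInput x ∈ P)) Finset.univ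
      (fun _ => false)
    exact ⟨T, fun x => by simp [hT x (by simp)], by simpa using hd⟩
  have hle : queryComplexity P ≤ Fintype.card (EdgeVar n) := Nat.sInf_le hmem
  obtain ⟨T, hT, hd⟩ := Nat.sInf_mem ⟨_, hmem⟩
  refine ⟨T, hT, lt_of_le_of_lt hd (lt_of_le_of_ne hle ?_)⟩
  rw [card_edgeVar]
  exact h

lemma graphOfInput_adj_of_lt {n : ℕ} (x : EdgeVar n → Bool) {i j : Fin n} (h : i < j) :
    (graphOfInput x).Adj i j ↔ x ⟨(i, j), h⟩ = true := by
  simp only [graphOfInput, SimpleGraph.fromRel_adj]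
  constructor
  · rintro ⟨_, ⟨_, h1⟩ | ⟨h2, _⟩⟩
    · exact h1
    · exact absurd h2 h.asymm
  · exact fun hx => ⟨h.ne, Or.inl ⟨h, hx⟩⟩

open scoped Classical in
/-- Assignments to the adjacency variables are graphs. -/
noncomputable def inputEquiv (n : ℕ) : (EdgeVar n → Bool) ≃o SimpleGraph (Fin n) where
  toFun := graphOfInput
  invFun G e := decide (G.Adj e.1.1 e.1.2)
  left_inv x := by
    funext e
    obtain ⟨⟨i, j⟩, h⟩ := e
    have := graphOfInput_adj_of_lt x h
    by_cases hx : x ⟨(i, j), h⟩ = true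
    · simp [hx, this]
    · simp [hx, this]
  right_inv G := by
    ext i j
    rcases lt_trichotomy i j with h | rfl | h
    · rw [graphOfInput_adj_of_lt _ h]; simp
    · simp
    · rw [SimpleGraph.adj_comm, graphOfInput_adj_of_lt _ h]; simp [SimpleGraph.adj_comm]
  map_rel_iff' {x y} := by
    constructor
    · rintro h ⟨⟨i, j⟩, hij⟩ hx
      exact (graphOfInput_adj_of_lt y hij).1 (h ((graphOfInput_adj_of_lt x hij).2 hx))
    · intro h i j hx
      rcases lt_trichotomy i j with hij | rfl | hij
      · exact (graphOfInput_adj_of_lt y hij).2 (h _ ((graphOfInput_adj_of_lt x hij).1 hx))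
      · simp at hx
      · rw [SimpleGraph.adj_comm] at hx ⊢
        exact (graphOfInput_adj_of_lt y hij).2 (h _ ((graphOfInput_adj_of_lt x hij).1 hx))

lemma inputEquiv_apply {n : ℕ} (x : EdgeVar n → Bool) : inputEquiv n x = graphOfInput x := rfl

/-- Pulling graphs back along a bijection. -/
def graphComap {V W : Type} (e : V ≃ W) : SimpleGraph W ≃o SimpleGraph V where
  toFun G := G.comap e
  invFun G := G.comap e.symm
  left_inv G := by ext; simp
  right_inv G := by ext; simp
  map_rel_iff' {G H} := by
    constructor
    · intro h a b hab
      simpa using @h (e.symm a) (e.symm b) (by simpa using hab)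
    · intro h a b hab
      exact h hab

lemma graphComap_adj {V W : Type} (e : V ≃ W) (G : SimpleGraph W) (a b : V) :
    (graphComap e G).Adj a b ↔ G.Adj (e a) (e b) := Iff.rfl

lemma graphComap_trans {U V W : Type} (e : U ≃ V) (f : V ≃ W) (G : SimpleGraph W) :
    graphComap (e.trans f) G = graphComap e (graphComap f G) := rfl

/-- The graph `G` is invariant under the permutation `σ`. -/
def Invariant {V : Type} (σ : Equiv.Perm V) (G : SimpleGraph V) : Prop :=
  ∀ a b, G.Adj (σ a) (σ b) ↔ G.Adj a b

lemma invariant_iff {V : Type} {σ : Equiv.Perm V} {G : SimpleGraph V} :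
    Invariant σ G ↔ graphComap σ G = G := by
  constructor
  · intro h; ext a b; exact h a b
  · intro h a b; rw [← graphComap_adj, h]

lemma graphComap_pow {V : Type} (σ : Equiv.Perm V) (j : ℕ) (G : SimpleGraph V) :
    (graphComap σ)^[j] G = graphComap (σ ^ j) G := by
  induction j with
  | zero => rfl
  | succ j ih =>
    rw [Function.iterate_succ_apply', ih, pow_succ]
    rfl

/-- The fixed point theorem for nonevasive graph properties. -/
theorem exists_invariant_graph {n : ℕ} {P : Set (SimpleGraph (Fin n))} (hP : IsGraphProperty P)
    (hmono : MonotoneDecreasing P) (hne : P.Nonempty) (hev : ¬ Evasive P)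
    {V : Type} (f : V ≃ Fin n) {p q : ℕ} (hp : p.Prime) (hq : q.Prime)
    {J : Type} [Finite J] (t : J → Equiv.Perm V) (ht : ∀ j, t j ^ p = 1)
    (hcomm : ∀ i j, t i * t j = t j * t i) (σ τ : Equiv.Perm V)
    (hσ : ∀ j, ∃ j', σ * t j = t j' * σ) (hσ' : ∀ j, ∃ j', t j * σ = σ * t j')
    (hτ : τ ^ q = 1) (hτt : ∀ j, t j * τ = τ * t j)
    (hτσ : ∀ G : SimpleGraph V, Invariant σ (G.comap τ) ↔ Invariant σ G) :
    ∃ G : SimpleGraph V, G.comap f.symm ∈ P ∧ G ≠ ⊥ ∧ (∀ j, Invariant (t j) G) ∧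
      Invariant σ G ∧ Invariant τ G := by
  classical
  have := Fact.mk hp
  have := Fintype.ofFinite J
  obtain ⟨T, hT, hd⟩ := exists_tree_of_not_evasive hev
  let Ψ : (EdgeVar n → Bool) ≃o SimpleGraph V := (inputEquiv n).trans (graphComap f)
  let act : Equiv.Perm V → ((EdgeVar n → Bool) ≃o (EdgeVar n → Bool)) := fun π =>
    (Ψ.trans (graphComap π)).trans Ψ.symm
  have hact : ∀ π x, Ψ (act π x) = graphComap π (Ψ x) := fun π x => by simp [act]
  have hfix : ∀ π x, act π x = x ↔ Invariant π (Ψ x) := by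
    intro π x
    rw [invariant_iff, ← hact, Ψ.injective.eq_iff]
  have hactpow : ∀ π (j : ℕ), π ^ j = 1 → ∀ x, (act π)^[j] x = x := by
    intro π j hj x
    have : ∀ j : ℕ, Ψ ((act π)^[j] x) = (graphComap π)^[j] (Ψ x) := by
      intro j
      induction j with
      | zero => rfl
      | succ j ih => rw [Function.iterate_succ_apply', Function.iterate_succ_apply', hact, ih]
    apply Ψ.injective
    rw [this, graphComap_pow, hj]
    rfl
  have hPinv : ∀ (π : Equiv.Perm (Fin n)) G, G.comap π ∈ P ↔ G ∈ P := by
    have h1 : ∀ (π : Equiv.Perm (Fin n)) G, G ∈ P → G.comap π ∈ P := by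
      intro π G hG
      have := hP π.symm G hG
      have h2 : G.map π.symm.toEmbedding = G.comap π := by
        ext a b
        rw [SimpleGraph.map_adj]
        constructor
        · rintro ⟨u, v, h, rfl, rfl⟩
          simpa using h
        · intro h
          exact ⟨π a, π b, h, by simp, by simp⟩
      rwa [h2] at this
    intro π G
    refine ⟨fun h => ?_, h1 π G⟩
    have := h1 π.symm _ h
    convert this using 1
    ext a b
    simp
  have hmemΨ : ∀ x, graphOfInput x ∈ P ↔ (Ψ x).comap f.symm ∈ P := by
    intro x
    have : (Ψ x).comap f.symm = graphOfInput x := by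
      ext a b
      simp [Ψ, graphComap_adj, inputEquiv_apply]
    rw [this]
  let Δ : Set (EdgeVar n → Bool) := {x | graphOfInput x ∈ P}
  have hΔ : IsLowerSet Δ := fun x y hyx hx => hmono _ _ ((inputEquiv n).monotone hyx) hx
  have hbot : ⊥ ∈ Δ := by
    obtain ⟨G, hG⟩ := hne
    have : (⊥ : EdgeVar n → Bool) ≤ (inputEquiv n).symm G := bot_le
    refine hΔ this ?_
    change inputEquiv n ((inputEquiv n).symm G) ∈ P
    simpa using hG
  let S : Set (EdgeVar n → Bool) := {x ∈ Δ | x ≠ ⊥}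
  have hS : ∀ π x, act π x ∈ S ↔ x ∈ S := by
    intro π x
    refine and_congr ?_ (not_congr ?_)
    · change graphOfInput _ ∈ P ↔ graphOfInput x ∈ P
      rw [hmemΨ, hmemΨ, hact]
      have : ((Ψ x).comap f.symm).comap ((f.symm.trans π).trans f) =
          (graphComap π (Ψ x)).comap f.symm := by
        ext a b
        simp [graphComap_adj]
      rw [← hPinv ((f.symm.trans π).trans f) ((Ψ x).comap f.symm), this]
    · exact map_eq_bot_iff (act π)
  have hA : Acyclic (ZMod p) S := acyclic_of_depth_lt hΔ hbot T hT hd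
  have hA1 := hA.fixed_family (t := fun j => act (t j)) (p := p) (fun j => hS (t j)) hp
    (fun j => hactpow _ _ (ht j)) (fun i j x => by
      apply Ψ.injective
      rw [hact, hact, hact, hact, ← graphComap_trans, ← graphComap_trans]
      exact congrArg (fun π => graphComap π (Ψ x)) (hcomm j i)) Finset.univ
  simp only [Finset.mem_univ, true_imp_iff, hfix] at hA1
  have hinvmul : ∀ (a b c : Equiv.Perm V), a * b = b * c → ∀ G, Invariant c (graphComap b G) ↔
      Invariant a G := by
    intro a b c h G
    rw [invariant_iff, invariant_iff, ← graphComap_trans]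
    have : c.trans b = b.trans a := h.symm
    rw [this, graphComap_trans]
    exact (graphComap b).injective.eq_iff
  have h2 := hA1.altSum_fixed (e := act σ) (fun x => by
    refine and_congr (hS σ x) ?_
    simp only [hact]
    constructor
    · intro h j
      obtain ⟨j', hj'⟩ := hσ' j
      exact (hinvmul _ _ _ hj' _).1 (h j')
    · intro h j
      obtain ⟨j', hj'⟩ := hσ j
      exact (hinvmul _ _ _ hj'.symm _).2 (h j'))
  have h3 := altSum_modEq_fixed (e := act τ) hq (S := {a | a ∈ {a | a ∈ S ∧
      ∀ j, Invariant (t j) (Ψ a)} ∧ act σ a = a}) (fun x => by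
    refine and_congr (and_congr (hS τ x) ?_) ?_
    · refine forall_congr' fun j => ?_
      rw [hact]
      exact hinvmul _ _ _ (hτt j) _
    · rw [hfix, hfix, hact]
      exact hτσ _) (hactpow _ _ hτ)
  by_contra hcon
  rw [h2] at h3
  have h4 : {a | a ∈ {a | a ∈ {a | a ∈ S ∧ ∀ j, Invariant (t j) (Ψ a)} ∧ act σ a = a} ∧
      act τ a = a} = (∅ : Set (EdgeVar n → Bool)) := by
    rw [Set.eq_empty_iff_forall_notMem]
    rintro x ⟨⟨⟨⟨hx1, hx2⟩, hx3⟩, hx4⟩, hx5⟩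
    rw [hfix] at hx4 hx5
    refine hcon ⟨Ψ x, (hmemΨ x).1 hx1, ?_, hx3, hx4, hx5⟩
    rwa [Ne, map_eq_bot_iff]
  rw [h4, altSum_empty] at h3
  have h5 := (Int.modEq_iff_dvd.1 h3)
  rw [sub_zero] at h5
  have h6 : q ∣ 1 := by exact_mod_cast h5
  exact hq.one_lt.ne' (Nat.dvd_one.1 h6)

end OrderComplex

namespace OrderComplex

section invariance

variable {V : Type} {G : SimpleGraph V}

lemma Invariant.mul {a b : Equiv.Perm V} (ha : Invariant a G) (hb : Invariant b G) :
    Invariant (a * b) G := fun x y => by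
  rw [Equiv.Perm.mul_apply, Equiv.Perm.mul_apply, ha, hb]

lemma Invariant.pow {a : Equiv.Perm V} (ha : Invariant a G) (j : ℕ) : Invariant (a ^ j) G := by
  induction j with
  | zero => exact fun x y => Iff.rfl
  | succ j ih => rw [pow_succ]; exact ih.mul ha

lemma invariant_comap {a b c : Equiv.Perm V} (h : a * b = b * c) :
    Invariant c (G.comap b) ↔ Invariant a G := by
  have h' : ∀ x, a (b x) = b (c x) := fun x => congrArg (fun π : Equiv.Perm V => π x) h
  constructor
  · intro hc x y
    have := hc (b.symm x) (b.symm y)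
    simpa [← h'] using this
  · intro ha x y
    simp only [SimpleGraph.comap_adj, ← h']
    exact ha _ _

/-- Counting oriented edges through an injection. -/
lemma card_le_two_mul_edges [Finite V] {A : Type} [Fintype A] (φ : A → V × V)
    (hinj : Function.Injective φ) (hadj : ∀ a, G.Adj (φ a).1 (φ a).2) :
    Fintype.card A ≤ 2 * G.edgeSet.ncard := by
  classical
  have := Fintype.ofFinite V
  rw [← SimpleGraph.coe_edgeFinset, Set.ncard_coe_finset,
    ← SimpleGraph.dart_card_eq_twice_card_edges]
  refine Fintype.card_le_of_injective (fun a => (⟨φ a, hadj a⟩ : G.Dart)) fun a b h => hinj ?_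
  exact congrArg SimpleGraph.Dart.toProd h

end invariance

section action

variable (k p r : ℕ)

/-- The vertex set: `k` blocks of size `p` and one block of size `r`. -/
abbrev Vert : Type := (ZMod k × ZMod p) ⊕ ZMod r

variable {k p r}

/-- Independent translations of the `k` small blocks. -/
def blockShift (r : ℕ) (v : ZMod k → ZMod p) : Equiv.Perm (Vert k p r) :=
  Equiv.sumCongr (Equiv.prodShear (Equiv.refl _) fun i => Equiv.addRight (v i)) (Equiv.refl _)

/-- The multipliers of the twisted rotation of the blocks. -/
def twist (k : ℕ) (l : (ZMod p)ˣ) (i : ZMod k) : (ZMod p)ˣ := if i = -1 then l else 1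

/-- Cyclic rotation of the small blocks, twisted so that a full turn is multiplication by `l`. -/
def blockTurn (k : ℕ) (l : (ZMod p)ˣ) : Equiv.Perm (ZMod k × ZMod p) :=
  Equiv.prodShear (Equiv.addRight 1) fun i => Units.mulLeft (twist k l i)

/-- Translations of the large block. -/
def shift (k p : ℕ) (c : ZMod r) : Equiv.Perm (Vert k p r) :=
  Equiv.sumCongr (Equiv.refl _) (Equiv.addRight c)

/-- Multiplication on the large block. -/
def scale (k p : ℕ) (w : (ZMod r)ˣ) : Equiv.Perm (Vert k p r) :=
  Equiv.sumCongr (Equiv.refl _) (Units.mulLeft w)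

/-- The twisted rotation on all the vertices. -/
def turn (k r : ℕ) (l : (ZMod p)ˣ) : Equiv.Perm (Vert k p r) :=
  Equiv.sumCongr (blockTurn k l) (Equiv.refl _)

@[simp] lemma blockShift_inl (v : ZMod k → ZMod p) (i x) :
    blockShift r v (Sum.inl (i, x)) = Sum.inl (i, x + v i) := rfl
@[simp] lemma blockShift_inr (v : ZMod k → ZMod p) (y) :
    blockShift r v (Sum.inr y) = Sum.inr y := rfl
@[simp] lemma turn_inl (l : (ZMod p)ˣ) (i x) :
    turn k r l (Sum.inl (i, x)) = Sum.inl (i + 1, twist k l i * x) := rfl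
@[simp] lemma turn_inr (l : (ZMod p)ˣ) (y) : turn k r l (Sum.inr y) = Sum.inr y := rfl
@[simp] lemma shift_inl (c : ZMod r) (z) : shift k p c (Sum.inl z) = Sum.inl z := rfl
@[simp] lemma shift_inr (c : ZMod r) (y) : shift k p c (Sum.inr y) = Sum.inr (y + c) := rfl
@[simp] lemma scale_inl (w : (ZMod r)ˣ) (z) : scale k p w (Sum.inl z) = Sum.inl z := rfl
@[simp] lemma scale_inr (w : (ZMod r)ˣ) (y) : scale k p w (Sum.inr y) = Sum.inr (w * y) := rfl

lemma blockShift_mul (v w : ZMod k → ZMod p) :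
    blockShift r v * blockShift r w = blockShift r (v + w) := by
  ext (⟨i, x⟩ | y)
  · simp only [Equiv.Perm.mul_apply, blockShift_inl, Pi.add_apply]
    congr 2; ring
  · simp

lemma blockShift_pow (v : ZMod k → ZMod p) (j : ℕ) :
    blockShift r v ^ j = blockShift r (j • v) := by
  induction j with
  | zero =>
    ext (⟨i, x⟩ | y)
    · simp
    · simp
  | succ j ih => rw [pow_succ, ih, blockShift_mul, succ_nsmul]

lemma shift_mul (c d : ZMod r) : shift k p c * shift k p d = shift k p (d + c) := by
  ext (z | y)
  · simp
  · simp [add_assoc]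

lemma shift_pow (c : ZMod r) (j : ℕ) : shift k p c ^ j = shift k p ((j : ZMod r) * c) := by
  induction j with
  | zero =>
    ext (z | y)
    · simp
    · simp
  | succ j ih =>
    rw [pow_succ, ih, shift_mul]
    congr 1; push_cast; ring

lemma scale_pow_inr (w : (ZMod r)ˣ) (j : ℕ) (y : ZMod r) :
    (scale k p w ^ j) (Sum.inr y) = Sum.inr ((w : ZMod r) ^ j * y) := by
  induction j generalizing y with
  | zero => simp
  | succ j ih => rw [pow_succ, Equiv.Perm.mul_apply, scale_inr, ih, pow_succ, mul_assoc]

lemma scale_pow_inl (w : (ZMod r)ˣ) (j : ℕ) (z) :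
    (scale k p w ^ j) (Sum.inl z) = Sum.inl z := by
  induction j with
  | zero => simp
  | succ j ih => rw [pow_succ, Equiv.Perm.mul_apply, scale_inl, ih]

lemma turn_pow_inl (l : (ZMod p)ˣ) (j : ℕ) (i : ZMod k) (x : ZMod p) :
    (turn k r l ^ j) (Sum.inl (i, x)) =
      Sum.inl (i + j, ((∏ a ∈ Finset.range j, twist k l (i + a) : (ZMod p)ˣ) : ZMod p) * x) := by
  induction j with
  | zero => simp
  | succ j ih =>
    rw [pow_succ', Equiv.Perm.mul_apply, ih, turn_inl, Finset.prod_range_succ]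
    push_cast
    congr 2
    · ring
    · ring

lemma turn_pow_inr (l : (ZMod p)ˣ) (j : ℕ) (y) :
    (turn k r l ^ j) (Sum.inr y) = Sum.inr y := by
  induction j with
  | zero => simp
  | succ j ih => rw [pow_succ, Equiv.Perm.mul_apply, turn_inr, ih]

lemma prod_twist [NeZero k] (l : (ZMod p)ˣ) (i : ZMod k) :
    ∏ a ∈ Finset.range k, twist k l (i + a) = l := by
  have h : ∏ a ∈ Finset.range k, twist k l (i + a) = ∏ c : ZMod k, twist k l c := by
    refine Finset.prod_bij' (fun a _ => i + (a : ZMod k)) (fun c _ => (c - i).val) ?_ ?_ ?_ ?_ ?_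
    · simp
    · intro c _; simpa using ZMod.val_lt _
    · intro a ha
      simp only [add_sub_cancel_left]
      exact ZMod.val_cast_of_lt (by simpa using ha)
    · intro c _; simp
    · intro a _; rfl
  rw [h]
  simp [twist]

lemma turn_pow_full [NeZero k] (l : (ZMod p)ˣ) (j : ℕ) (i : ZMod k) (x : ZMod p) :
    (turn k r l ^ (k * j)) (Sum.inl (i, x)) = Sum.inl (i, (l : ZMod p) ^ j * x) := by
  induction j with
  | zero => simp
  | succ j ih =>
    rw [Nat.mul_succ, add_comm, pow_add, Equiv.Perm.mul_apply, ih, turn_pow_inl, prod_twist]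
    simp [pow_succ', mul_assoc]

lemma turn_pow_eq_one [NeZero k] (l : (ZMod p)ˣ) {m : ℕ} (hl : l ^ m = 1) :
    turn k r l ^ (k * m) = 1 := by
  ext (⟨i, x⟩ | y)
  · rw [turn_pow_full, ← Units.val_pow_eq_pow_val, hl]; simp
  · rw [turn_pow_inr]; simp

lemma turn_mul_shift (l : (ZMod p)ˣ) (c : ZMod r) :
    turn k r l * shift k p c = shift k p c * turn k r l := by
  ext (⟨i, x⟩ | y) <;> simp

/-- Invariance under the product of the commuting rotations is invariance under both. -/
lemma invariant_turn_shift_iff [NeZero k] [NeZero r] (l : (ZMod p)ˣ) {m : ℕ} (hl : l ^ m = 1)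
    (hcop : Nat.Coprime (k * m) r) (G : SimpleGraph (Vert k p r)) :
    Invariant (turn k r l * shift k p 1) G ↔
      Invariant (turn k r l) G ∧ ∀ c : ZMod r, Invariant (shift k p c) G := by
  constructor
  · intro h
    have hpow : ∀ j : ℕ, Invariant (turn k r l ^ j * shift k p (j : ZMod r)) G := by
      intro j
      have := h.pow j
      rwa [Commute.mul_pow (turn_mul_shift l 1), shift_pow, mul_one] at this
    have h1 : Invariant (turn k r l) G := by
      obtain ⟨a, ha1, ha2⟩ := Nat.chineseRemainder hcop 1 0
      have := hpow a
      have e1 : turn k r l ^ a = turn k r l ^ 1 := by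
        refine pow_eq_pow_iff_modEq.2 (ha1.of_dvd (orderOf_dvd_of_pow_eq_one
          (turn_pow_eq_one l hl)))
      have e2 : (a : ZMod r) = 0 := by
        have := (ZMod.natCast_eq_natCast_iff a 0 r).2 ha2
        simpa using this
      rw [e1, e2, pow_one] at this
      have e3 : shift k p (0 : ZMod r) = 1 := by ext (z | y) <;> simp
      rwa [e3, mul_one] at this
    refine ⟨h1, fun c => ?_⟩
    have h2 : Invariant (shift k p (1 : ZMod r)) G := by
      obtain ⟨a, ha1, ha2⟩ := Nat.chineseRemainder hcop 0 1
      have := hpow a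
      have e1 : turn k r l ^ a = turn k r l ^ 0 := by
        refine pow_eq_pow_iff_modEq.2 (ha1.of_dvd (orderOf_dvd_of_pow_eq_one
          (turn_pow_eq_one l hl)))
      have e2 : (a : ZMod r) = 1 := by
        have := (ZMod.natCast_eq_natCast_iff a 1 r).2 ha2
        simpa using this
      rwa [e1, e2, pow_zero, one_mul] at this
    have := h2.pow c.val
    rwa [shift_pow, mul_one, ZMod.natCast_zmod_val] at this
  · rintro ⟨h1, h2⟩
    exact h1.mul (h2 1)


/-- Orbits of edges under the group are large. -/
lemma min_le_two_mul_edges [NeZero k] [Fact p.Prime] [Fact r.Prime] {q : ℕ} {l : (ZMod p)ˣ}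
    (hl : ∀ u, u ∈ Subgroup.zpowers l) {w : (ZMod r)ˣ} (hw : orderOf w = q) (hpr : p ≤ r)
    {G : SimpleGraph (Vert k p r)} (hG : G ≠ ⊥) (ht : ∀ v, Invariant (blockShift r v) G)
    (hturn : Invariant (turn k r l) G) (hshift : ∀ c, Invariant (shift k p c) G)
    (hscale : Invariant (scale k p w) G) :
    min (r * q) (k * p * (p - 1)) ≤ 2 * G.edgeSet.ncard := by
  obtain ⟨a, b, hab⟩ := SimpleGraph.ne_bot_iff_exists_adj.1 hG
  have hp := (Fact.out : p.Prime)
  have hr := (Fact.out : r.Prime)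
  have hcross : ∀ i x y, G.Adj (Sum.inl (i, x)) (Sum.inr y) →
      min (r * q) (k * p * (p - 1)) ≤ 2 * G.edgeSet.ncard := by
    intro i x y h
    refine (min_le_right _ _).trans ?_
    calc k * p * (p - 1) ≤ k * p * r := Nat.mul_le_mul_left _ (by omega)
      _ = Fintype.card ((ZMod k × ZMod p) × ZMod r) := by
          simp [ZMod.card]
      _ ≤ _ := card_le_two_mul_edges (fun z => (Sum.inl z.1, Sum.inr z.2)) ?_ ?_
    · rintro ⟨a, b⟩ ⟨c, d⟩ h
      simpa using h
    · rintro ⟨⟨i', x'⟩, y'⟩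
      have h1 := ((hturn.pow (i' - i).val) _ _).2 h
      rw [turn_pow_inl, turn_pow_inr, ZMod.natCast_zmod_val, add_sub_cancel] at h1
      have h2 := ((hshift (y' - y)) _ _).2 h1
      rw [shift_inl, shift_inr, add_sub_cancel] at h2
      generalize ((∏ a ∈ Finset.range (i' - i).val, twist k l (i + a) : (ZMod p)ˣ) : ZMod p) * x
        = z at h2
      have h3 := (ht (fun _ => x' - z) _ _).2 h2
      rwa [blockShift_inl, blockShift_inr, add_sub_cancel] at h3
  rcases a with ⟨i, x⟩ | y <;> rcases b with ⟨i', x'⟩ | y'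
  · refine (min_le_right _ _).trans ?_
    by_cases hii : i = i'
    · subst hii
      have hx : x' - x ≠ 0 := by
        intro h
        rw [sub_eq_zero.1 h] at hab
        exact G.loopless.irrefl _ hab
      have h0 := (ht (fun _ => -x) _ _).2 hab
      rw [blockShift_inl, blockShift_inl, add_neg_cancel, ← sub_eq_add_neg] at h0
      calc k * p * (p - 1) = Fintype.card (ZMod k × ZMod p × (ZMod p)ˣ) := by
            simp [ZMod.card, ZMod.card_units_eq_totient, Nat.totient_prime hp, mul_assoc]
        _ ≤ _ := card_le_two_mul_edges (fun z => (Sum.inl (z.1, z.2.1),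
            Sum.inl (z.1, z.2.1 + z.2.2))) ?_ ?_
      · rintro ⟨a, b, c⟩ ⟨a', b', c'⟩ h
        simp only [Prod.mk.injEq, Sum.inl.injEq] at h
        obtain ⟨⟨rfl, rfl⟩, -, h3⟩ := h
        simp only [add_right_inj, Units.val_inj] at h3
        rw [h3]
      · rintro ⟨i', u, c⟩
        set M : (ZMod p)ˣ := ∏ a ∈ Finset.range (i' - i).val, twist k l (i + a) with hM
        obtain ⟨j, hj⟩ := (mem_powers_iff_mem_zpowers (x := l)
          (y := M⁻¹ * c * (Units.mk0 _ hx)⁻¹)).2 (hl _)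
        have h1 := ((hturn.pow (k * j)) _ _).2 h0
        rw [turn_pow_full, turn_pow_full] at h1
        have h2 := ((hturn.pow (i' - i).val) _ _).2 h1
        rw [turn_pow_inl, turn_pow_inl, ZMod.natCast_zmod_val, add_sub_cancel, ← hM] at h2
        have h3 := (ht (fun _ => u) _ _).2 h2
        rw [blockShift_inl, blockShift_inl, mul_zero, mul_zero, zero_add] at h3
        have h4 : (M : ZMod p) * ((l : ZMod p) ^ j * (x' - x)) = c := by
          have h5 : (l : ZMod p) ^ j = ((M⁻¹ * c * (Units.mk0 _ hx)⁻¹ : (ZMod p)ˣ) : ZMod p) := by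
            rw [← hj]; simp
          rw [h5]
          push_cast
          rw [Units.val_mk0]
          have := M.ne_zero
          field_simp
        rwa [h4, add_comm] at h3
    · calc k * p * (p - 1) ≤ k * p * p := Nat.mul_le_mul_left _ (by omega)
        _ = Fintype.card (ZMod k × ZMod p × ZMod p) := by simp [ZMod.card, mul_assoc]
        _ ≤ _ := card_le_two_mul_edges (fun z => (Sum.inl (i + z.1, z.2.1),
            Sum.inl (i' + z.1, z.2.2))) ?_ ?_
      · rintro ⟨a, b, c⟩ ⟨a', b', c'⟩ h
        simp at h
        simp [h]
      · rintro ⟨m, u, u'⟩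
        have h1 := ((hturn.pow m.val) _ _).2 hab
        rw [turn_pow_inl, turn_pow_inl, ZMod.natCast_zmod_val] at h1
        generalize ((∏ a ∈ Finset.range m.val, twist k l (i + a) : (ZMod p)ˣ) : ZMod p) * x
          = z at h1
        generalize ((∏ a ∈ Finset.range m.val, twist k l (i' + a) : (ZMod p)ˣ) : ZMod p) * x'
          = z' at h1
        have h2 := (ht (fun j => if j = i + m then u - z else u' - z') _ _).2 h1
        rw [blockShift_inl, blockShift_inl, if_pos rfl, if_neg (by simpa using Ne.symm hii),
          add_sub_cancel, add_sub_cancel] at h2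
        exact h2
  · exact hcross _ _ _ hab
  · exact hcross _ _ _ hab.symm
  · refine (min_le_left _ _).trans ?_
    have hy : y' - y ≠ 0 := by
      intro h
      rw [sub_eq_zero.1 h] at hab
      exact G.loopless.irrefl _ hab
    calc r * q = Fintype.card (ZMod r × Fin q) := by simp [ZMod.card]
      _ ≤ _ := card_le_two_mul_edges (fun z => (Sum.inr z.1,
          Sum.inr ((w : ZMod r) ^ (z.2 : ℕ) * (y' - y) + z.1))) ?_ ?_
    · rintro ⟨a, b⟩ ⟨a', b'⟩ h
      simp only [Prod.mk.injEq, Sum.inr.injEq] at h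
      obtain ⟨rfl, h⟩ := h
      have h1 : (w : ZMod r) ^ (b : ℕ) = (w : ZMod r) ^ (b' : ℕ) :=
        mul_right_cancel₀ hy (add_right_cancel h)
      have h2 : w ^ (b : ℕ) = w ^ (b' : ℕ) := by
        ext; simpa using h1
      have := pow_injOn_Iio_orderOf (x := w) (by simp [hw]) (by simp [hw]) h2
      rw [Fin.ext this]
    · rintro ⟨c, j⟩
      have h1 := (hshift (-y) _ _).2 hab
      rw [shift_inr, shift_inr, add_neg_cancel, ← sub_eq_add_neg] at h1
      have h2 := (hscale.pow j _ _).2 h1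
      rw [scale_pow_inr, scale_pow_inr, mul_zero] at h2
      have h3 := (hshift c _ _).2 h2
      rwa [shift_inr, shift_inr, zero_add] at h3

/-- A nonevasive graph property contains a graph with many edges. -/
theorem exists_many_edges {n : ℕ} {P : Set (SimpleGraph (Fin n))} (hP : IsGraphProperty P)
    (hmono : MonotoneDecreasing P) (hne : P.Nonempty) (hev : ¬ Evasive P)
    {k p r q : ℕ} (hk : 0 < k) (hp : p.Prime) (hr : r.Prime) (hq : q.Prime)
    (hn : n = k * p + r) (hkr : k < r) (hpr : p ≤ r) (hqr : q ∣ r - 1) :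
    ∃ G ∈ P, min (r * q) (k * p * (p - 1)) ≤ 2 * G.edgeSet.ncard := by
  have := Fact.mk hp
  have := Fact.mk hr
  have := Fact.mk hq
  have : NeZero k := ⟨hk.ne'⟩
  obtain ⟨l, hl⟩ := IsCyclic.exists_generator (α := (ZMod p)ˣ)
  obtain ⟨w, hw⟩ := exists_prime_orderOf_dvd_card (G := (ZMod r)ˣ) q (by
    rwa [ZMod.card_units_eq_totient, Nat.totient_prime hr])
  have hlp : l ^ (p - 1) = 1 := ZMod.units_pow_card_sub_one_eq_one p l
  have hcop : Nat.Coprime (k * (p - 1)) r := by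
    refine Nat.Coprime.mul_left ?_ ?_
    · exact ((Nat.Prime.coprime_iff_not_dvd hr).2 (Nat.not_dvd_of_pos_of_lt hk hkr)).symm
    · have := hp.two_le
      exact ((Nat.Prime.coprime_iff_not_dvd hr).2
        (Nat.not_dvd_of_pos_of_lt (by omega) (by omega))).symm
  have hcard : Fintype.card (Vert k p r) = n := by
    simp [Vert, ZMod.card, hn]
  let f : Vert k p r ≃ Fin n := Fintype.equivFinOfCardEq hcard
  have hinv := fun G => invariant_turn_shift_iff (k := k) l hlp hcop G
  obtain ⟨G, hGP, hG, ht, hσ, hτ⟩ := exists_invariant_graph hP hmono hne hev f hp hq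
    (J := ZMod k → ZMod p) (blockShift r) (fun v => by
      rw [blockShift_pow]
      ext (⟨i, x⟩ | y) <;> simp)
    (fun v w => by rw [blockShift_mul, blockShift_mul, add_comm])
    (turn k r l * shift k p 1) (scale k p w)
    (fun v => ⟨fun j => twist k l (j - 1) * v (j - 1), by
      ext (⟨i, x⟩ | y) <;> simp [mul_add]⟩)
    (fun v => ⟨fun j => ((twist k l j)⁻¹ : (ZMod p)ˣ) * v (j + 1), by
      ext (⟨i, x⟩ | y)
      · simp only [Equiv.Perm.mul_apply, shift_inl, turn_inl, blockShift_inl, mul_add,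
          Units.mul_inv_cancel_left]
      · simp only [Equiv.Perm.mul_apply, shift_inr, turn_inr, blockShift_inr]⟩)
    (by
      ext (z | y)
      · simp [scale_pow_inl]
      · have : (w : ZMod r) ^ q = 1 := by
          rw [← Units.val_pow_eq_pow_val, ← hw, pow_orderOf_eq_one, Units.val_one]
        simp [scale_pow_inr, this])
    (fun v => by ext (⟨i, x⟩ | y) <;> simp)
    (fun G => by
      rw [hinv, hinv]
      refine and_congr (invariant_comap (by ext (⟨i, x⟩ | y) <;> simp)) ?_
      have hkey : ∀ c, Invariant (shift k p c) (G.comap (scale k p w)) ↔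
          Invariant (shift k p ((w : ZMod r) * c)) G := fun c => invariant_comap (by
        ext (⟨i, x⟩ | y) <;> simp [mul_add])
      simp only [hkey]
      constructor
      · intro h c
        have := h ((w⁻¹ : (ZMod r)ˣ) * c)
        rwa [Units.mul_inv_cancel_left] at this
      · intro h c
        exact h _)
  have hmin := min_le_two_mul_edges hl hw hpr hG ht ((hinv G).1 hσ).1 ((hinv G).1 hσ).2 hτ
  refine ⟨_, hGP, hmin.trans (le_of_eq ?_)⟩
  congr 1
  refine Set.ncard_congr' ?_
  exact (SimpleGraph.Iso.mapEdgeSet (SimpleGraph.Iso.comap f.symm G)).symm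

end action
end OrderComplex

namespace PrimesERH

open Complex Metric

/-- A logarithm of a nonvanishing holomorphic function on a disc, normalized at the centre. -/
lemma exists_log_of_ne_zero_on_ball {h : ℂ → ℂ} {c : ℂ} {R : ℝ} (hR : 0 < R)
    (hd : DifferentiableOn ℂ h (ball c R)) (hz : ∀ z ∈ ball c R, h z ≠ 0) :
    ∃ l : ℂ → ℂ, l c = 0 ∧ (∀ z ∈ ball c R, HasDerivAt l (deriv h z / h z) z) ∧
      ∀ z ∈ ball c R, h z = h c * exp (l z) := by
  have hc : c ∈ ball c R := mem_ball_self hR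
  have hd' : DifferentiableOn ℂ (fun z => deriv h z / h z) (ball c R) :=
    (hd.deriv isOpen_ball).div hd hz
  obtain ⟨l, hl0, hl⟩ := hd'.isExactOn_ball.with_val_at c 0
  refine ⟨l, hl0, hl, fun z hzR => ?_⟩
  have key : ∀ y ∈ ball c R, HasDerivAt (fun y => h y * exp (-l y)) 0 y := by
    intro y hy
    have h1 := (hd.differentiableAt (isOpen_ball.mem_nhds hy)).hasDerivAt
    have h2 := h1.mul (hl y hy).neg.cexp
    have h3 := hz y hy
    refine h2.congr_deriv ?_
    field_simp
    ring
  have hconst := (convex_ball c R).is_const_of_fderivWithin_eq_zero (𝕜 := ℂ)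
    (f := fun y => h y * exp (-l y)) (fun y hy => (key y hy).differentiableAt.differentiableWithinAt)
    (fun y hy => by
      rw [fderivWithin_of_isOpen isOpen_ball hy]
      have := (key y hy).hasFDerivAt.fderiv
      rw [this]; ext; simp) hzR hc
  simp only [hl0, neg_zero, exp_zero, mul_one] at hconst
  rw [← hconst, mul_assoc, ← exp_add]
  simp

/-- Bounds for all derivatives of the logarithmic derivative at the centre of a disc on which
a holomorphic function has no zeros and is not much larger than at the centre. -/
lemma norm_iteratedDeriv_logDeriv_le {h : ℂ → ℂ} {c : ℂ} {R r M : ℝ} (hr : 0 < r) (hrR : r < R)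
    (hM : 0 < M) (hd : DifferentiableOn ℂ h (ball c R)) (hz : ∀ z ∈ ball c R, h z ≠ 0)
    (hb : ∀ z ∈ ball c R, ‖h z‖ ≤ Real.exp M * ‖h c‖) (k : ℕ) :
    ‖iteratedDeriv k (fun z => deriv h z / h z) c‖
      ≤ (k + 1).factorial * (2 * M * r / (R - r)) / r ^ (k + 1) := by
  have hR : 0 < R := hr.trans hrR
  have hc : c ∈ ball c R := mem_ball_self hR
  obtain ⟨l, hl0, hl, hexp⟩ := exists_log_of_ne_zero_on_ball hR hd hz
  have hldiff : DifferentiableOn ℂ l (ball c R) :=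
    fun z hzR => (hl z hzR).differentiableAt.differentiableWithinAt
  have hre : ∀ z ∈ ball c R, (l z).re ≤ M := by
    intro z hzR
    have h1 := hb z hzR
    rw [hexp z hzR, norm_mul, norm_exp, mul_comm] at h1
    exact Real.exp_le_exp.1 (le_of_mul_le_mul_right h1 (norm_pos_iff.2 (hz c hc)))
  have hmem : ∀ w ∈ ball (0 : ℂ) R, c + w ∈ ball c R := by
    intro w hw
    simpa [mem_ball, dist_eq_norm] using hw
  have hborel : ∀ z ∈ sphere c r, ‖l z‖ ≤ 2 * M * r / (R - r) := by
    intro z hzr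
    have hnorm : ‖z - c‖ = r := by simpa [dist_eq_norm] using hzr
    have := borelCaratheodory_zero (f := fun w => l (c + w)) (z := z - c) (R := R) hM
      (hldiff.comp ((differentiable_id.const_add c).differentiableOn) hmem)
      (fun w hw => hre _ (hmem w hw)) hR (by simpa [hnorm] using hrR) (by simpa using hl0)
    simpa [hnorm] using this
  have hdc : DiffContOnCl ℂ l (ball c r) :=
    (hldiff.mono (closedBall_subset_ball hrR)).diffContOnCl_ball subset_rfl
  have hcauchy := norm_iteratedDeriv_le_of_forall_mem_sphere_norm_le (k + 1) hr hdc hborel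
  have heq : deriv l =ᶠ[nhds c] fun z => deriv h z / h z :=
    Filter.eventually_of_mem (isOpen_ball.mem_nhds hc) fun z hzR => (hl z hzR).deriv
  rwa [iteratedDeriv_succ', heq.iteratedDeriv_eq] at hcauchy

end PrimesERH

namespace PrimesERH

open Complex Metric Set Filter MeasureTheory Topology

/-- Sum of a character over a full period of natural numbers. -/
lemma sum_range_modulus {m : ℕ} [NeZero m] (f : ZMod m → ℂ) :
    ∑ k ∈ Finset.range m, f (k : ZMod m) = ∑ a, f a := by
  refine Finset.sum_nbij' (fun k => (k : ZMod m)) (fun a => a.val) ?_ ?_ ?_ ?_ ?_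
  · simp
  · intro a _; simpa using ZMod.val_lt a
  · intro k hk; exact ZMod.val_cast_of_lt (by simpa using hk)
  · intro a _; simp
  · simp

lemma norm_sum_range_le {m : ℕ} [NeZero m] {χ : DirichletCharacter ℂ m} (hχ : χ ≠ 1) (N : ℕ) :
    ‖∑ k ∈ Finset.range N, χ (k : ZMod m)‖ ≤ m := by
  induction N using Nat.strong_induction_on with
  | _ N ih =>
    by_cases hN : N < m
    · refine (norm_sum_le_of_le _ (fun k _ => χ.norm_le_one _)).trans ?_
      simpa using hN.le
    · obtain ⟨M, rfl⟩ := Nat.exists_eq_add_of_le (not_lt.1 hN)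
      rw [Finset.sum_range_add, sum_range_modulus, MulChar.sum_eq_zero_of_ne_one hχ, zero_add]
      simpa using ih M (by have := NeZero.pos m; lia)

lemma norm_sum_Icc_le {m : ℕ} [NeZero m] {χ : DirichletCharacter ℂ m} (hχ : χ ≠ 1) (N : ℕ) :
    ‖∑ k ∈ Finset.Icc 1 N, χ (k : ZMod m)‖ ≤ 2 * m := by
  have h1 : ∑ k ∈ Finset.Icc 1 N, χ (k : ZMod m)
      = ∑ k ∈ Finset.range (N + 1), χ (k : ZMod m) - χ 0 := by
    induction N with
    | zero => simp
    | succ N ih =>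
      rw [Finset.sum_Icc_succ_top (by lia), ih, Finset.sum_range_succ _ (N + 1)]
      ring
  rw [h1]
  have h2 := norm_sum_range_le hχ (N + 1)
  have h3 := χ.norm_le_one 0
  have h4 : (1 : ℝ) ≤ m := by exact_mod_cast NeZero.pos m
  linarith [norm_sub_le (∑ k ∈ Finset.range (N + 1), χ (k : ZMod m)) (χ 0)]

/-- The partial sums of a character, as a function of a real variable, cut off below `1`. -/
noncomputable def partialSum {m : ℕ} (χ : DirichletCharacter ℂ m) (t : ℝ) : ℂ :=
  (Ioi (1 : ℝ)).indicator (fun t => ∑ k ∈ Finset.Icc 1 ⌊t⌋₊, χ (k : ZMod m)) t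

lemma norm_partialSum_le {m : ℕ} [NeZero m] {χ : DirichletCharacter ℂ m} (hχ : χ ≠ 1) (t : ℝ) :
    ‖partialSum χ t‖ ≤ 2 * m :=
  (norm_indicator_le_norm_self _ _).trans (norm_sum_Icc_le hχ _)

lemma measurable_partialSum {m : ℕ} (χ : DirichletCharacter ℂ m) : Measurable (partialSum χ) := by
  refine Measurable.indicator ?_ measurableSet_Ioi
  exact (measurable_from_nat (f := fun n => ∑ k ∈ Finset.Icc 1 n, χ (k : ZMod m))).comp
    Nat.measurable_floor

lemma mellin_partialSum {m : ℕ} (χ : DirichletCharacter ℂ m) (s : ℂ) :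
    mellin (partialSum χ) (-s) =
      ∫ t in Ioi (1 : ℝ), (∑ k ∈ Finset.Icc 1 ⌊t⌋₊, χ (k : ZMod m)) * (t : ℂ) ^ (-(s + 1)) := by
  have h : ∀ t : ℝ, (t : ℂ) ^ (-s - 1) • partialSum χ t = (Ioi (1 : ℝ)).indicator
      (fun t : ℝ => (∑ k ∈ Finset.Icc 1 ⌊t⌋₊, χ (k : ZMod m)) * (t : ℂ) ^ (-(s + 1))) t := by
    intro t
    by_cases ht : t ∈ Ioi (1 : ℝ)
    · simp only [partialSum, indicator_of_mem ht, smul_eq_mul]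
      rw [mul_comm, neg_add, sub_eq_add_neg]
    · simp [partialSum, indicator_of_notMem ht]
  simp only [mellin, h]
  rw [setIntegral_indicator measurableSet_Ioi,
    inter_eq_self_of_subset_right (Ioi_subset_Ioi zero_le_one)]

lemma norm_mellin_partialSum_le {m : ℕ} [NeZero m] {χ : DirichletCharacter ℂ m} (hχ : χ ≠ 1)
    {s : ℂ} (hs : 0 < s.re) : ‖mellin (partialSum χ) (-s)‖ ≤ 2 * m / s.re := by
  rw [mellin_partialSum]
  have hlt : -(s.re + 1) < -1 := by linarith
  have hintegrable : IntegrableOn (fun t : ℝ => 2 * (m : ℝ) * t ^ (-(s.re + 1))) (Ioi 1) :=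
    (integrableOn_Ioi_rpow_of_lt hlt one_pos).const_mul _
  refine (norm_integral_le_of_norm_le hintegrable ?_).trans_eq ?_
  · refine (ae_restrict_iff' measurableSet_Ioi).2 (Eventually.of_forall fun t ht => ?_)
    have ht0 : 0 < t := one_pos.trans ht
    rw [norm_mul, norm_cpow_eq_rpow_re_of_pos ht0]
    simp only [neg_re, add_re, one_re]
    gcongr
    exact norm_sum_Icc_le hχ _
  · rw [integral_const_mul, integral_Ioi_rpow_of_lt hlt one_pos]
    simp
    field_simp

lemma differentiableAt_mellin_partialSum {m : ℕ} [NeZero m] {χ : DirichletCharacter ℂ m}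
    (hχ : χ ≠ 1) {s : ℂ} (hs : s.re < 0) : DifferentiableAt ℂ (mellin (partialSum χ)) s := by
  refine mellin_differentiableAt_of_isBigO_rpow (a := 0) (b := s.re - 1) ?_ ?_ hs ?_ (by linarith)
  · refine LocallyIntegrable.locallyIntegrableOn ?_ _
    refine (locallyIntegrable_const (2 * (m : ℝ))).mono
      (measurable_partialSum χ).aestronglyMeasurable (Eventually.of_forall fun t => ?_)
    exact (norm_partialSum_le hχ t).trans (Real.le_norm_self _)
  · simp only [neg_zero, Real.rpow_zero]
    exact Asymptotics.IsBigO.of_bound (2 * m) (Eventually.of_forall fun t => by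
      simpa using norm_partialSum_le hχ t)
  · have h0 : partialSum χ =ᶠ[𝓝[>] 0] fun _ => 0 := by
      filter_upwards [mem_nhdsWithin_of_mem_nhds (Iio_mem_nhds (one_pos (α := ℝ)))] with t ht
      exact indicator_of_notMem (by simpa using ht.le) _
    exact h0.trans_isBigO (Asymptotics.isBigO_zero _ _)

/-- Analytic continuation by partial summation. -/
lemma LFunction_eq_mellin {m : ℕ} [NeZero m] {χ : DirichletCharacter ℂ m} (hχ : χ ≠ 1)
    {s : ℂ} (hs : 0 < s.re) : χ.LFunction s = s * mellin (partialSum χ) (-s) := by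
  have hopen : IsOpen {s : ℂ | 0 < s.re} := isOpen_lt continuous_const continuous_re
  have hpre : IsPreconnected {s : ℂ | 0 < s.re} := (convex_halfSpace_re_gt 0).isPreconnected
  have hf : AnalyticOnNhd ℂ χ.LFunction {s : ℂ | 0 < s.re} :=
    (DirichletCharacter.differentiable_LFunction hχ).differentiableOn.analyticOnNhd hopen
  have hg : AnalyticOnNhd ℂ (fun s => s * mellin (partialSum χ) (-s)) {s : ℂ | 0 < s.re} := by
    refine DifferentiableOn.analyticOnNhd (fun z hz => ?_) hopen
    refine (DifferentiableAt.mul differentiableAt_id ?_).differentiableWithinAt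
    exact (differentiableAt_mellin_partialSum hχ (s := -z) (by simpa using hz)).comp z
      differentiableAt_id.neg
  refine hf.eqOn_of_preconnected_of_eventuallyEq hg hpre (z₀ := 2) (by simp) ?_ hs
  have h1 : {s : ℂ | 1 < s.re} ∈ 𝓝 (2 : ℂ) :=
    (isOpen_lt continuous_const continuous_re).mem_nhds (by simp)
  filter_upwards [h1] with z hz
  have hz : 1 < z.re := hz
  rw [DirichletCharacter.LFunction_eq_LSeries χ hz, mellin_partialSum,
    LSeries_eq_mul_integral (fun n => χ (n : ZMod m)) le_rfl (zero_lt_one.trans hz)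
      (χ.LSeriesSummable_of_one_lt_re hz)]
  simp only [Real.rpow_zero]
  exact Asymptotics.IsBigO.of_bound (2 * m) (Eventually.of_forall fun t => by
    simpa using norm_sum_Icc_le hχ t)

lemma norm_LFunction_le {m : ℕ} [NeZero m] {χ : DirichletCharacter ℂ m} (hχ : χ ≠ 1)
    {s : ℂ} (hs : 0 < s.re) : ‖χ.LFunction s‖ ≤ ‖s‖ * (2 * m / s.re) := by
  rw [LFunction_eq_mellin hχ hs, norm_mul]
  gcongr
  exact norm_mellin_partialSum_le hχ hs

end PrimesERH

namespace PrimesERH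

open Complex Metric Set Filter Topology DirichletCharacter
open scoped LSeries.notation

/-- The `L`-function of a character, with the pole removed for the trivial one. -/
noncomputable def regL {m : ℕ} [NeZero m] (χ : DirichletCharacter ℂ m) : ℂ → ℂ :=
  open Classical in if χ = 1 then LFunctionTrivChar₁ m else χ.LFunction

lemma regL_one {m : ℕ} [NeZero m] : regL (1 : DirichletCharacter ℂ m) = LFunctionTrivChar₁ m :=
  if_pos rfl

lemma regL_of_ne_one {m : ℕ} [NeZero m] {χ : DirichletCharacter ℂ m} (hχ : χ ≠ 1) :
    regL χ = χ.LFunction :=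
  if_neg hχ

lemma differentiable_regL {m : ℕ} [NeZero m] (χ : DirichletCharacter ℂ m) :
    Differentiable ℂ (regL χ) := by
  rcases eq_or_ne χ 1 with rfl | hχ
  · rw [regL_one]; exact differentiable_LFunctionTrivChar₁ m
  · rw [regL_of_ne_one hχ]; exact differentiable_LFunction hχ

lemma LFunctionTrivChar₁_eq_prod_mul (m : ℕ) [NeZero m] (s : ℂ) :
    LFunctionTrivChar₁ m s =
      (∏ p ∈ m.primeFactors, (1 - (p : ℂ) ^ (-s))) * LFunctionTrivChar₁ 1 s := by
  rcases eq_or_ne s 1 with rfl | hs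
  · simp [cpow_neg_one]
  · simp only [LFunctionTrivChar₁, Function.update_of_ne hs,
      LFunctionTrivChar_eq_mul_riemannZeta hs, Nat.primeFactors_one, Finset.prod_empty]
    ring

lemma norm_prod_euler_le {m : ℕ} (hm : m ≠ 0) {s : ℂ} (hs : 0 ≤ s.re) :
    ‖∏ p ∈ m.primeFactors, (1 - (p : ℂ) ^ (-s))‖ ≤ m := by
  rw [norm_prod]
  calc ∏ p ∈ m.primeFactors, ‖1 - (p : ℂ) ^ (-s)‖ ≤ ∏ p ∈ m.primeFactors, (p : ℝ) := by
        refine Finset.prod_le_prod (fun _ _ => norm_nonneg _) fun p hp => ?_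
        have hp' := Nat.prime_of_mem_primeFactors hp
        have h2 : (2 : ℝ) ≤ p := by exact_mod_cast hp'.two_le
        have h1 : ‖(p : ℂ) ^ (-s)‖ ≤ 1 := by
          rw [norm_natCast_cpow_of_pos hp'.pos, neg_re]
          exact Real.rpow_le_one_of_one_le_of_nonpos (by linarith) (by linarith)
        have := norm_sub_le (1 : ℂ) ((p : ℂ) ^ (-s))
        rw [norm_one] at this
        linarith
    _ ≤ m := by
        rw [← Nat.cast_prod]
        exact_mod_cast Nat.le_of_dvd (Nat.pos_of_ne_zero hm) (Nat.prod_primeFactors_dvd m)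

lemma exists_norm_LFunction_ge {c : ℝ} (hc : 1 < c) :
    ∃ S : ℝ, 0 < S ∧ ∀ (m : ℕ) [NeZero m] (χ : DirichletCharacter ℂ m),
      1 ≤ S * ‖χ.LFunction c‖ := by
  have hc' : 1 < (c : ℂ).re := by simpa using hc
  have hsum : Summable fun n => ‖LSeries.term 1 (c : ℂ) n‖ :=
    (LSeriesSummable_one_iff.2 hc').norm
  have hkey : ∀ (m : ℕ) [NeZero m] (χ : DirichletCharacter ℂ m),
      1 ≤ (∑' n, ‖LSeries.term 1 (c : ℂ) n‖) * ‖χ.LFunction c‖ := by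
    intro m _ χ
    have h1 := LSeries.mul_mu_eq_one χ hc'
    have hle : ∀ n, ‖LSeries.term (↗χ * ↗ArithmeticFunction.moebius) (c : ℂ) n‖
        ≤ ‖LSeries.term 1 (c : ℂ) n‖ := by
      intro n
      refine LSeries.norm_term_le _ ?_
      simp only [Pi.mul_apply, norm_mul, Pi.one_apply, norm_one]
      refine mul_le_one₀ (χ.norm_le_one _) (norm_nonneg _) ?_
      rw [norm_intCast]
      exact_mod_cast ArithmeticFunction.abs_moebius_le_one
    have h2 : ‖LSeries (↗χ * ↗ArithmeticFunction.moebius) (c : ℂ)‖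
        ≤ ∑' n, ‖LSeries.term 1 (c : ℂ) n‖ := by
      have hs' := Summable.of_nonneg_of_le (fun _ => norm_nonneg _) hle hsum
      exact (norm_tsum_le_tsum_norm hs').trans (hs'.tsum_le_tsum hle hsum)
    have h3 := congrArg norm h1
    rw [norm_mul, norm_one, ← LFunction_eq_LSeries χ hc'] at h3
    rw [← h3, mul_comm]
    gcongr
  refine ⟨∑' n, ‖LSeries.term 1 (c : ℂ) n‖, ?_, hkey⟩
  have := hkey 1 1
  by_contra! h
  nlinarith [norm_nonneg ((1 : DirichletCharacter ℂ 1).LFunction c)]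

/-- Uniform growth bound on a disc reaching to the line `Re s = 1/2`. -/
lemma exists_norm_regL_le {c : ℝ} (hc : 2 ≤ c) :
    ∃ C : ℝ, 3 ≤ C ∧ ∀ (m : ℕ) [NeZero m] (χ : DirichletCharacter ℂ m),
      ∀ z ∈ ball (c : ℂ) (c - 1 / 2), ‖regL χ z‖ ≤ C * m * ‖regL χ c‖ := by
  obtain ⟨S, hS, hSχ⟩ := exists_norm_LFunction_ge (c := c) (by linarith)
  obtain ⟨K, hK⟩ := (isCompact_closedBall (c : ℂ) (c - 1 / 2)).exists_bound_of_continuousOn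
    (differentiable_LFunctionTrivChar₁ 1).continuous.continuousOn
  have hK0 : 0 ≤ K :=
    (norm_nonneg _).trans (hK c (mem_closedBall_self (by linarith)))
  refine ⟨max 3 (max (8 * c * S) (K * S)), le_max_left _ _, fun m _ χ z hz => ?_⟩
  have hm : (0 : ℝ) ≤ m := m.cast_nonneg
  have hzn : ‖z - c‖ < c - 1 / 2 := by simpa [dist_eq_norm] using hz
  have hre : 1 / 2 < z.re := by
    have := (neg_abs_le (z - c).re).trans' (neg_le_neg (abs_re_le_norm (z - c)))
    simp at this
    linarith
  have hzn' : ‖z‖ ≤ 2 * c := by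
    have := norm_add_le (z - c) (c : ℂ)
    simp only [sub_add_cancel, norm_real, Real.norm_eq_abs] at this
    rw [abs_of_nonneg (by linarith)] at this
    linarith
  rcases eq_or_ne χ 1 with rfl | hχ
  · rw [regL_one, LFunctionTrivChar₁_eq_prod_mul, norm_mul]
    have hc1 : (c : ℂ) ≠ 1 := by
      intro h; have : c = 1 := by exact_mod_cast h
      linarith
    have h1 : 1 ≤ S * ‖LFunctionTrivChar₁ m c‖ := by
      rw [LFunctionTrivChar₁, Function.update_of_ne hc1, norm_mul]
      refine (hSχ m 1).trans ?_
      gcongr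
      refine le_mul_of_one_le_left (norm_nonneg _) ?_
      rw [← ofReal_one, ← ofReal_sub, norm_real, Real.norm_eq_abs]
      exact (le_abs_self _).trans' (by linarith)
    calc _ ≤ (m : ℝ) * K := by
          gcongr
          · exact norm_prod_euler_le (NeZero.ne m) (by linarith)
          · exact hK z (ball_subset_closedBall hz)
      _ ≤ (m * K) * (S * ‖LFunctionTrivChar₁ m c‖) := le_mul_of_one_le_right (by positivity) h1
      _ = K * S * m * ‖LFunctionTrivChar₁ m c‖ := by ring
      _ ≤ _ := by gcongr; exact (le_max_right _ _).trans' (le_max_right _ _)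
  · rw [regL_of_ne_one hχ]
    calc _ ≤ ‖z‖ * (2 * m / z.re) := norm_LFunction_le hχ (by linarith)
      _ ≤ (2 * c) * (2 * m / (1 / 2)) := by gcongr
      _ = 8 * c * m := by ring
      _ ≤ (8 * c * m) * (S * ‖χ.LFunction c‖) := le_mul_of_one_le_right (by positivity) (hSχ m χ)
      _ = 8 * c * S * m * ‖χ.LFunction c‖ := by ring
      _ ≤ _ := by gcongr; exact (le_max_right _ _).trans' (le_max_left _ _)

end PrimesERH

namespace PrimesERH

open Complex Metric Set Filter Topology DirichletCharacter
open ArithmeticFunction ArithmeticFunction.vonMangoldt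
open scoped LSeries.notation

lemma regL_ne_zero (erh : ExtendedRiemannHypothesis) {m : ℕ} [NeZero m]
    (χ : DirichletCharacter ℂ m) {z : ℂ} (hz : 1 / 2 < z.re) : regL χ z ≠ 0 := by
  have hL : χ ≠ 1 ∨ z ≠ 1 → χ.LFunction z ≠ 0 := by
    intro h
    rcases le_or_gt 1 z.re with h1 | h1
    · exact LFunction_ne_zero_of_one_le_re χ h h1
    · intro h0
      linarith [erh m χ z (by linarith) h1 h0]
  rcases eq_or_ne χ 1 with rfl | hχ
  · rw [regL_one]
    rcases eq_or_ne z 1 with rfl | hz1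
    · exact LFunctionTrivChar₁_apply_one_ne_zero m
    · rw [LFunctionTrivChar₁, Function.update_of_ne hz1]
      exact mul_ne_zero (sub_ne_zero_of_ne hz1) (hL (.inr hz1))
  · rw [regL_of_ne_one hχ]
    exact hL (.inl hχ)

lemma exists_norm_iteratedDeriv_regL_le (erh : ExtendedRiemannHypothesis) {c d : ℝ} (hc : 2 ≤ c)
    (hd0 : 0 < d) (hd1 : d < 1) :
    ∃ C : ℝ, 3 ≤ C ∧ ∀ (m : ℕ) [NeZero m] (χ : DirichletCharacter ℂ m) (k : ℕ),
      ‖iteratedDeriv k (fun z => deriv (regL χ) z / regL χ z) c‖ ≤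
        (k + 1).factorial * (2 * Real.log (C * m) * (c - 1 / 2 - d) / d)
          / (c - 1 / 2 - d) ^ (k + 1) := by
  obtain ⟨C, hC, hb⟩ := exists_norm_regL_le hc
  refine ⟨C, hC, fun m _ χ k => ?_⟩
  have hm : (1 : ℝ) ≤ m := by exact_mod_cast NeZero.pos m
  have hCm : 1 < C * m := by nlinarith
  have := norm_iteratedDeriv_logDeriv_le (h := regL χ) (c := c) (R := c - 1 / 2)
    (r := c - 1 / 2 - d) (by linarith) (by linarith) (Real.log_pos hCm)
    (differentiable_regL χ).differentiableOn (fun z hz => regL_ne_zero erh χ ?_)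
    (fun z hz => by rw [Real.exp_log (by linarith)]; exact hb m χ z hz) k
  · simpa using this
  · have hzn : ‖z - c‖ < c - 1 / 2 := by simpa [dist_eq_norm] using hz
    have := (neg_abs_le (z - c).re).trans' (neg_le_neg (abs_re_le_norm (z - c)))
    simp at this
    linarith

lemma LSeries_residueClass_eq_regL {m : ℕ} [NeZero m] {a : ZMod m} (ha : IsUnit a) {s : ℂ}
    (hs : 1 < s.re) :
    LSeries ↗(residueClass a) s = (m.totient : ℂ)⁻¹ * (1 * s - 1)⁻¹ + -(m.totient : ℂ)⁻¹ *
      ∑ χ : DirichletCharacter ℂ m, χ a⁻¹ * (deriv (regL χ) s / regL χ s) := by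
  classical
  have h := eqOn_LFunctionResidueClassAux ha (x := s) hs
  have ha' : IsUnit a⁻¹ := isUnit_of_dvd_one ⟨a, (ZMod.inv_mul_of_unit a ha).symm⟩
  have hsum : ∑ χ ∈ ({1}ᶜ : Finset (DirichletCharacter ℂ m)),
      χ a⁻¹ * deriv (LFunction χ) s / LFunction χ s =
      ∑ χ ∈ ({1}ᶜ : Finset (DirichletCharacter ℂ m)),
        χ a⁻¹ * (deriv (regL χ) s / regL χ s) := by
    refine Finset.sum_congr rfl fun χ hχ => ?_
    rw [regL_of_ne_one (by simpa using hχ), mul_div_assoc]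
  rw [Fintype.sum_eq_add_sum_compl 1, MulChar.one_apply ha', one_mul, regL_one, ← hsum]
  simp only [LFunctionResidueClassAux] at h
  rw [eq_sub_iff_add_eq] at h
  rw [← h]
  trans (m.totient : ℂ)⁻¹ * (-deriv (LFunctionTrivChar₁ m) s / LFunctionTrivChar₁ m s -
    ∑ χ ∈ ({1}ᶜ : Finset (DirichletCharacter ℂ m)),
      χ a⁻¹ * deriv (LFunction χ) s / LFunction χ s) + (m.totient : ℂ)⁻¹ / (s - 1)
  · congr!
  · ring

lemma logMul_iterate_apply (f : ℕ → ℂ) (k n : ℕ) :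
    (LSeries.logMul^[k] f) n = (Complex.log n) ^ k * f n := by
  induction k with
  | zero => simp
  | succ k ih => rw [Function.iterate_succ_apply', LSeries.logMul, ih]; ring

/-- The Dirichlet series `∑ Λ(n) (log n)^k n^{-s}` over a residue class, termwise. -/
lemma term_logMul_residueClass {m : ℕ} (a : ZMod m) (k : ℕ) (s : ℝ) (n : ℕ) :
    LSeries.term (LSeries.logMul^[k] ↗(residueClass a)) s n =
      ((residueClass a n * Real.log n ^ k * (n : ℝ) ^ (-s) : ℝ) : ℂ) := by
  rcases eq_or_ne n 0 with rfl | hn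
  · simp
  · rw [LSeries.term_of_ne_zero hn, logMul_iterate_apply, div_eq_mul_inv, ← cpow_neg]
    push_cast
    rw [ofReal_cpow n.cast_nonneg]
    push_cast
    ring

lemma summable_residueClass_log_pow {m : ℕ} (a : ZMod m) (k : ℕ) {s : ℝ} (hs : 1 < s) :
    Summable fun n : ℕ => residueClass a n * Real.log n ^ k * (n : ℝ) ^ (-s) := by
  have h : LSeriesSummable (LSeries.logMul^[k] ↗(residueClass a)) s := by
    refine LSeriesSummable_of_abscissaOfAbsConv_lt_re ?_
    rw [LSeries.absicssaOfAbsConv_logPowMul]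
    exact (abscissaOfAbsConv_residueClass_le_one a).trans_lt (by simpa using mod_cast hs)
  rw [LSeriesSummable, funext (term_logMul_residueClass a k s)] at h
  exact_mod_cast h

lemma exists_le_tsum_residueClass (erh : ExtendedRiemannHypothesis) {D d : ℝ} (hD : 1 ≤ D)
    (hd0 : 0 < d) (hd1 : d < 1) :
    ∃ C : ℝ, 3 ≤ C ∧ ∀ (m : ℕ) [NeZero m] (a : ZMod m), IsUnit a → ∀ k : ℕ,
      (m.totient : ℝ)⁻¹ * (k.factorial / D ^ (k + 1)) -
        (k + 1).factorial * (2 * Real.log (C * m) * (D + 1 / 2 - d) / d)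
          / (D + 1 / 2 - d) ^ (k + 1) ≤
        ∑' n : ℕ, residueClass a n * Real.log n ^ k * (n : ℝ) ^ (-(D + 1)) := by
  obtain ⟨C, hC, hb⟩ := exists_norm_iteratedDeriv_regL_le erh (c := D + 1) (by linarith) hd0 hd1
  refine ⟨C, hC, fun m _ a ha k => ?_⟩
  set c : ℂ := ((D + 1 : ℝ) : ℂ) with hc
  set B := (k + 1).factorial * (2 * Real.log (C * m) * (D + 1 / 2 - d) / d)
          / (D + 1 / 2 - d) ^ (k + 1) with hB
  set T := ∑' n : ℕ, residueClass a n * Real.log n ^ k * (n : ℝ) ^ (-(D + 1)) with hT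
  have hc1 : 1 < c.re := by simp [hc]; linarith
  have htot : (0 : ℝ) < m.totient := by exact_mod_cast Nat.totient_pos.2 (NeZero.pos m)
  have hBχ : ∀ χ : DirichletCharacter ℂ m,
      ‖iteratedDeriv k (fun z => deriv (regL χ) z / regL χ z) c‖ ≤ B := by
    intro χ
    have := hb m χ k
    rwa [show D + 1 - 1 / 2 - d = D + 1 / 2 - d by ring] at this
  have hser : LSeries (LSeries.logMul^[k] ↗(residueClass a)) c = (T : ℂ) := by
    rw [LSeries, hT, ofReal_tsum]
    exact tsum_congr fun n => term_logMul_residueClass a k (D + 1) n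
  have hder := LSeries_iteratedDeriv (f := ↗(residueClass a)) k (s := c)
    ((abscissaOfAbsConv_residueClass_le_one a).trans_lt (by exact_mod_cast hc1))
  rw [hser] at hder
  have hev : LSeries ↗(residueClass a) =ᶠ[𝓝 c] fun s => (m.totient : ℂ)⁻¹ * (1 * s - 1)⁻¹ +
      -(m.totient : ℂ)⁻¹ *
      ∑ χ : DirichletCharacter ℂ m, χ a⁻¹ * (deriv (regL χ) s / regL χ s) := by
    filter_upwards [(isOpen_lt continuous_const continuous_re).mem_nhds hc1] with s hs
    exact LSeries_residueClass_eq_regL ha hs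
  have hsm : ∀ χ : DirichletCharacter ℂ m,
      ContDiffAt ℂ k (fun s => deriv (regL χ) s / regL χ s) c := by
    intro χ
    have h1 : AnalyticAt ℂ (regL χ) c := (differentiable_regL χ).analyticAt c
    exact (h1.deriv.div h1 (regL_ne_zero erh χ (by linarith))).contDiffAt
  have hsmsum : ContDiffAt ℂ k (fun s => ∑ χ : DirichletCharacter ℂ m,
      χ a⁻¹ * (deriv (regL χ) s / regL χ s)) c :=
    ContDiffAt.sum fun χ _ => contDiffAt_const.mul (hsm χ)
  have hc0 : (1 * c - 1) ≠ 0 := by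
    intro h
    have := congrArg re h
    simp at this
    linarith
  have hpole : ContDiffAt ℂ k (fun s : ℂ => (1 * s - 1)⁻¹) c :=
    ((contDiffAt_const.mul contDiffAt_id).sub contDiffAt_const).inv hc0
  have hpoleval : iteratedDeriv k (fun s : ℂ => (1 * s - 1)⁻¹) c
      = (-1) ^ k * ((k.factorial / D ^ (k + 1) : ℝ) : ℂ) := by
    rw [iteratedDeriv_eq_iterate, iter_deriv_inv_linear_sub]
    have : (1 * c - 1) = (D : ℂ) := by simp [hc]
    beta_reduce
    rw [this, show (-1 - k : ℤ) = -((k + 1 : ℕ) : ℤ) by push_cast; ring, zpow_neg, zpow_natCast]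
    push_cast
    field_simp
    simp
  rw [hev.iteratedDeriv_eq, iteratedDeriv_fun_add (contDiffAt_const.mul hpole)
    (contDiffAt_const.mul hsmsum), iteratedDeriv_const_mul_field, iteratedDeriv_const_mul_field,
    iteratedDeriv_fun_sum (fun χ _ => contDiffAt_const.mul (hsm χ)), hpoleval] at hder
  simp only [iteratedDeriv_const_mul_field] at hder
  have hE : ‖∑ χ : DirichletCharacter ℂ m, χ a⁻¹ *
      iteratedDeriv k (fun s => deriv (regL χ) s / regL χ s) c‖ ≤ m.totient * B := by
    refine (norm_sum_le_of_le _ (f := fun χ : DirichletCharacter ℂ m => χ a⁻¹ *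
      iteratedDeriv k (fun s => deriv (regL χ) s / regL χ s) c) (n := fun _ => B)
      fun χ _ => ?_).trans_eq ?_
    · rw [norm_mul]
      exact (mul_le_of_le_one_left (norm_nonneg _) (χ.norm_le_one _)).trans (hBχ χ)
    · rw [Finset.sum_const, nsmul_eq_mul, Finset.card_univ, ← Nat.card_eq_fintype_card,
        DirichletCharacter.card_eq_totient_of_hasEnoughRootsOfUnity]
  set E := ∑ χ : DirichletCharacter ℂ m, χ a⁻¹ *
      iteratedDeriv k (fun s => deriv (regL χ) s / regL χ s) c with hEdef
  have hdiff : (((m.totient : ℝ)⁻¹ * (k.factorial / D ^ (k + 1)) - T : ℝ) : ℂ)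
      = (-1) ^ k * ((m.totient : ℂ)⁻¹ * E) := by
    have h1 : ((-1 : ℂ) ^ k) * (-1) ^ k = 1 := by rw [← mul_pow]; simp
    have h2 := congrArg (fun z => (-1 : ℂ) ^ k * z) hder
    simp only [mul_add] at h2
    push_cast at h2 ⊢
    linear_combination h2 + (T - (m.totient : ℂ)⁻¹ * (k.factorial / D ^ (k + 1))) * h1
  have hnorm := congrArg norm hdiff
  rw [norm_real, norm_mul, norm_mul, norm_pow, norm_neg, norm_one, one_pow, one_mul, norm_inv,
    Complex.norm_natCast] at hnorm
  have h3 : (m.totient : ℝ)⁻¹ * ‖E‖ ≤ B := by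
    rw [inv_mul_le_iff₀ htot]; exact hE
  have h4 := (le_abs_self ((m.totient : ℝ)⁻¹ * (k.factorial / D ^ (k + 1)) - T)).trans
    (hnorm.trans_le h3)
  linarith

end PrimesERH

namespace PrimesERH

open ArithmeticFunction ArithmeticFunction.vonMangoldt

lemma log_pow_mul_rpow_le {D A : ℝ} (hD : 0 ≤ D) (hA : 0 < A) (k : ℕ) {n : ℕ} (hn : n ≠ 0) :
    D ^ k / k.factorial * (Real.log n ^ k * (n : ℝ) ^ (-(D + 1)))
      ≤ (D / A) ^ k * (n : ℝ) ^ (A - D - 1) := by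
  have hn1 : (1 : ℝ) ≤ n := by exact_mod_cast Nat.one_le_iff_ne_zero.2 hn
  have hlog : 0 ≤ Real.log n := Real.log_nonneg hn1
  have h := Real.pow_div_factorial_le_exp (A * Real.log n) (by positivity) k
  rw [mul_comm A, ← Real.rpow_def_of_pos (by linarith)] at h
  calc D ^ k / k.factorial * (Real.log n ^ k * (n : ℝ) ^ (-(D + 1)))
      = (D / A) ^ k * ((Real.log n * A) ^ k / k.factorial * (n : ℝ) ^ (-(D + 1))) := by
        rw [div_pow, mul_pow]; field_simp
    _ ≤ (D / A) ^ k * ((n : ℝ) ^ A * (n : ℝ) ^ (-(D + 1))) := by gcongr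
    _ = _ := by rw [← Real.rpow_add (by linarith)]; ring_nf

lemma summable_vonMangoldt_rpow_neg_two :
    Summable fun n : ℕ => vonMangoldt n * (n : ℝ) ^ (-2 : ℝ) := by
  have h := summable_residueClass_log_pow (0 : ZMod 1) 0 (s := 2) (by norm_num)
  refine h.congr fun n => ?_
  have : residueClass (0 : ZMod 1) n = vonMangoldt n :=
    Set.indicator_of_mem (s := {n : ℕ | (n : ZMod 1) = 0}) (Subsingleton.elim (α := ZMod 1) _ _) _
  rw [this, pow_zero, mul_one]

/-- If a residue class contains no prime in `[Y, X]`, the weighted sum over it is small. -/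
lemma tsum_residueClass_le_of_no_prime {m : ℕ} {a : ZMod m} {D Y X t u : ℝ} (hD : 1 ≤ D)
    (hY : 1 ≤ Y) (hX : 1 ≤ X) (ht : 0 < t) (hu : 0 < u) (hu1 : u < 1) (hDu : 1 ≤ D * u)
    (hno : ∀ p : ℕ, p.Prime → (p : ZMod m) = a → Y ≤ p → p ≤ X → False) (k : ℕ) :
    D ^ k / k.factorial *
        ∑' n : ℕ, residueClass a n * Real.log n ^ k * (n : ℝ) ^ (-(D + 1)) ≤
      (∑' n : ℕ, vonMangoldt n * (n : ℝ) ^ (-2 : ℝ)) *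
          ((1 + t)⁻¹ ^ k * Y ^ (1 + D * t) + (1 - u)⁻¹ ^ k * X ^ (1 - D * u)) +
        2 * √X * Real.log X / Y := by
  classical
  set E₁ := (1 + t)⁻¹ ^ k * Y ^ (1 + D * t)
  set E₂ := (1 - u)⁻¹ ^ k * X ^ (1 - D * u)
  have hu0 : 0 < 1 - u := by linarith
  have hE₁ : 0 ≤ E₁ := by positivity
  have hE₂ : 0 ≤ E₂ := by positivity
  set F : Finset ℕ := {n ∈ Finset.Ioc 0 ⌊X⌋₊ | ¬ n.Prime}
  set g : ℕ → ℝ := fun n => if n ∈ F then vonMangoldt n / Y else 0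
  have hg0 : ∀ n, 0 ≤ g n := fun n => by
    simp only [g]; split_ifs
    · exact div_nonneg vonMangoldt_nonneg (by linarith)
    · exact le_rfl
  have hgsum : HasSum g (∑ n ∈ F, vonMangoldt n / Y) := by
    have h : HasSum g (∑ n ∈ F, g n) := hasSum_sum_of_ne_finset_zero fun n hn => if_neg hn
    rwa [Finset.sum_congr rfl (fun n hn => if_pos hn)] at h
  have hgle : ∑ n ∈ F, vonMangoldt n / Y ≤ 2 * √X * Real.log X / Y := by
    rw [← Finset.sum_div, ← Chebyshev.psi_sub_theta_eq_sum_not_prime]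
    gcongr
    exact Chebyshev.psi_sub_theta_le hX
  have hterm : ∀ n : ℕ,
      D ^ k / k.factorial * (residueClass a n * Real.log n ^ k * (n : ℝ) ^ (-(D + 1))) ≤
        vonMangoldt n * (n : ℝ) ^ (-2 : ℝ) * (E₁ + E₂) + g n := by
    intro n
    have hΛ : 0 ≤ vonMangoldt n := vonMangoldt_nonneg
    have hrhs : 0 ≤ vonMangoldt n * (n : ℝ) ^ (-2 : ℝ) * (E₁ + E₂) := by positivity
    rcases eq_or_ne n 0 with rfl | hn
    · simpa using hg0 0
    have hn1 : (1 : ℝ) ≤ n := by exact_mod_cast Nat.one_le_iff_ne_zero.2 hn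
    have hn0 : (0 : ℝ) < n := by linarith
    have hlog : 0 ≤ Real.log n := Real.log_nonneg hn1
    by_cases hna : (n : ZMod m) = a
    swap
    · rw [residueClass, Set.indicator_of_notMem (by simpa using hna)]
      simpa using add_nonneg hrhs (hg0 n)
    have hw : ∀ A : ℝ, 0 < A → ∀ W : ℝ, (D / A) ^ k * (n : ℝ) ^ (A - D - 1) ≤ W →
        D ^ k / k.factorial * (residueClass a n * Real.log n ^ k * (n : ℝ) ^ (-(D + 1))) ≤
          vonMangoldt n * W := by
      intro A hA W hW
      rw [residueClass, Set.indicator_of_mem (by simpa using hna)]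
      calc _ = vonMangoldt n *
            (D ^ k / k.factorial * (Real.log n ^ k * (n : ℝ) ^ (-(D + 1)))) := by ring
        _ ≤ _ := by
          gcongr
          exact (log_pow_mul_rpow_le (by linarith) hA k hn).trans hW
    rcases lt_or_ge (n : ℝ) Y with hnY | hnY
    · have h := hw (D * (1 + t)) (by positivity) ((n : ℝ) ^ (-2 : ℝ) * E₁) (by
        rw [show D / (D * (1 + t)) = (1 + t)⁻¹ by field_simp,
          show D * (1 + t) - D - 1 = -2 + (1 + D * t) by ring, Real.rpow_add hn0]
        calc _ = (n : ℝ) ^ (-2 : ℝ) * ((1 + t)⁻¹ ^ k * (n : ℝ) ^ (1 + D * t)) := by ring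
          _ ≤ (n : ℝ) ^ (-2 : ℝ) * ((1 + t)⁻¹ ^ k * Y ^ (1 + D * t)) := by gcongr)
      nlinarith [hg0 n, mul_nonneg (mul_nonneg hΛ (Real.rpow_nonneg hn0.le (-2 : ℝ))) hE₂]
    rcases lt_or_ge X (n : ℝ) with hnX | hnX
    · have h := hw (D * (1 - u)) (by positivity) ((n : ℝ) ^ (-2 : ℝ) * E₂) (by
        rw [show D / (D * (1 - u)) = (1 - u)⁻¹ by field_simp,
          show D * (1 - u) - D - 1 = -2 + (1 - D * u) by ring, Real.rpow_add hn0]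
        calc _ = (n : ℝ) ^ (-2 : ℝ) * ((1 - u)⁻¹ ^ k * (n : ℝ) ^ (1 - D * u)) := by ring
          _ ≤ (n : ℝ) ^ (-2 : ℝ) * ((1 - u)⁻¹ ^ k * X ^ (1 - D * u)) := by
            gcongr (n : ℝ) ^ (-2 : ℝ) * (_ * ?_)
            exact Real.rpow_le_rpow_of_nonpos (by linarith) hnX.le (by linarith))
      nlinarith [hg0 n, mul_nonneg (mul_nonneg hΛ (Real.rpow_nonneg hn0.le (-2 : ℝ))) hE₁]
    · have hnp : ¬ n.Prime := fun hp => hno n hp hna hnY hnX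
      have hgn : g n = vonMangoldt n / Y := if_pos (by
        simp only [F, Finset.mem_filter, Finset.mem_Ioc]
        exact ⟨⟨Nat.pos_of_ne_zero hn, Nat.le_floor hnX⟩, hnp⟩)
      have h := hw D (by linarith) Y⁻¹ (by
        rw [div_self (by linarith), one_pow, one_mul, show D - D - 1 = (-1 : ℝ) by ring,
          Real.rpow_neg_one]
        gcongr)
      rw [hgn, div_eq_mul_inv (vonMangoldt n)]
      linarith
  have hs := (summable_residueClass_log_pow a k (s := D + 1) (by linarith)).mul_left
    (D ^ k / k.factorial)
  have hs' := summable_vonMangoldt_rpow_neg_two.mul_right (E₁ + E₂)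
  rw [← tsum_mul_left, ← tsum_mul_right]
  refine (hs.tsum_le_tsum hterm (hs'.add hgsum.summable)).trans ?_
  rw [hs'.tsum_add hgsum.summable, hgsum.tsum_eq]
  gcongr

end PrimesERH

namespace PrimesERH

open ArithmeticFunction ArithmeticFunction.vonMangoldt

lemma lower_tail_le {i D l : ℝ} {k : ℕ} (hi : 0 < i) (hD : D * i ^ 2 = 32) (hl : 0 ≤ l)
    (hk : D * l ≤ k) :
    (1 + i)⁻¹ ^ k * Real.exp (l * (1 - i)) ^ (1 + D * i) ≤ Real.exp (-l) := by
  have hlog := Real.le_log_one_add_of_nonneg hi.le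
  have h1 : (1 + i)⁻¹ ^ k = Real.exp (-(k * Real.log (1 + i))) := by
    rw [Real.exp_neg, Real.exp_nat_mul, Real.exp_log (by linarith), inv_pow]
  rw [h1, ← Real.exp_mul, ← Real.exp_add, Real.exp_le_exp]
  have h2 : D * l * (2 * i / (i + 2)) ≤ k * Real.log (1 + i) := by gcongr
  have h3 : 2 + (D * i - i - D * i ^ 2) ≤ D * (2 * i / (i + 2)) := by
    rw [← mul_div_assoc, le_div_iff₀ (by linarith)]
    nlinarith
  nlinarith [mul_le_mul_of_nonneg_left h3 hl]

lemma upper_tail_le {i D l : ℝ} {k : ℕ} (hi : 0 < i) (hi' : i ≤ 1 / 8) (hD : D * i ^ 2 = 32)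
    (hl : 0 ≤ l) (hk : k ≤ D * l + 1) :
    (1 - i / 4)⁻¹ ^ k * Real.exp (l * (1 + i)) ^ (1 - D * (i / 4)) ≤ 3 * Real.exp (-l) := by
  have hpos : 0 < 1 - i / 4 := by linarith
  have hlog := Real.one_sub_inv_le_log_of_pos hpos
  have hinv : (1 - i / 4)⁻¹ ≤ 1 + i / 4 * (1 + i / 2) := by
    rw [inv_le_iff_one_le_mul₀ hpos]
    nlinarith [mul_pos hi hi]
  have h1 : (1 - i / 4)⁻¹ ^ k = Real.exp (k * -Real.log (1 - i / 4)) := by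
    rw [mul_neg, Real.exp_neg, Real.exp_nat_mul, Real.exp_log hpos, inv_pow]
  have h2 : (k : ℝ) * -Real.log (1 - i / 4) ≤ (D * l + 1) * (i / 4 * (1 + i / 2)) := by
    refine mul_le_mul hk (by linarith) ?_ (k.cast_nonneg.trans hk)
    exact neg_nonneg.2 (Real.log_nonpos hpos.le (by linarith))
  rw [h1, ← Real.exp_mul, ← Real.exp_add]
  have h3 : (D * l + 1) * (i / 4 * (1 + i / 2)) + l * (1 + i) * (1 - D * (i / 4)) =
      -(D * i ^ 2) * l / 8 + i / 4 * (1 + i / 2) + l * (1 + i) := by ring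
  have h4 : i / 4 * (1 + i / 2) ≤ 1 := by nlinarith
  calc _ ≤ Real.exp (1 + -l) := by
        rw [Real.exp_le_exp]
        rw [hD] at h3
        nlinarith
    _ ≤ 3 * Real.exp (-l) := by
        rw [Real.exp_add]
        gcongr
        exact Real.exp_one_lt_three.le

lemma ratio_pow_le {e D l : ℝ} {k : ℕ} (he : 0 < e) (he' : e ≤ 1 / 2) (hD : 1 ≤ D * e)
    (hl : 0 ≤ l) (hk : D * l ≤ k) :
    (D / (D + 1 / 2 - e / 8)) ^ k ≤ Real.exp (l * (-1 / 2 + e / 2)) := by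
  have hD0 : 0 < D := by
    by_contra! h
    nlinarith
  have hr : 0 < D + 1 / 2 - e / 8 := by linarith
  have h0 : 0 < D / (D + 1 / 2 - e / 8) := by positivity
  have hlog := Real.log_le_sub_one_of_pos h0
  rw [← Real.exp_log h0, ← Real.exp_nat_mul, Real.exp_le_exp]
  have h1 : D / (D + 1 / 2 - e / 8) - 1 = -((1 / 2 - e / 8) / (D + 1 / 2 - e / 8)) := by
    rw [div_sub_one hr.ne', ← neg_div]; congr 1; ring
  have h2 : D * l * ((1 / 2 - e / 8) / (D + 1 / 2 - e / 8)) ≤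
      k * ((1 / 2 - e / 8) / (D + 1 / 2 - e / 8)) := by
    have : 0 ≤ (1 / 2 - e / 8) / (D + 1 / 2 - e / 8) := div_nonneg (by linarith) hr.le
    gcongr
  have h3 : 1 / 2 - e / 2 ≤ D * ((1 / 2 - e / 8) / (D + 1 / 2 - e / 8)) := by
    rw [← mul_div_assoc, le_div_iff₀ hr]
    nlinarith
  have h4 : (k : ℝ) * Real.log (D / (D + 1 / 2 - e / 8)) ≤
      k * -((1 / 2 - e / 8) / (D + 1 / 2 - e / 8)) := by
    gcongr; linarith
  nlinarith [mul_le_mul_of_nonneg_left h3 hl]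

lemma middle_le {i e l : ℝ} (hi : 0 < i) (hi' : i ≤ 1 / 8) (hie : 3 * i ≤ e) (hl : 0 ≤ l) :
    2 * √(Real.exp (l * (1 + i))) * Real.log (Real.exp (l * (1 + i))) / Real.exp (l * (1 - i)) ≤
      4 * l * Real.exp (l * (-1 / 2 + e / 2)) := by
  rw [Real.log_exp, Real.sqrt_eq_rpow, ← Real.exp_mul, div_eq_mul_inv, ← Real.exp_neg]
  calc 2 * Real.exp (l * (1 + i) * (1 / 2)) * (l * (1 + i)) * Real.exp (-(l * (1 - i)))
      = 2 * (1 + i) * l * Real.exp (l * (1 + i) * (1 / 2) + -(l * (1 - i))) := by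
        rw [Real.exp_add]; ring
    _ ≤ _ := by
        gcongr
        · linarith
        · nlinarith

set_option maxHeartbeats 1000000 in
/-- Under the extended Riemann hypothesis, for large `x = exp l` every unit residue class modulo
`m ≤ x ^ (1 / 2 - e)` contains a prime between `x ^ (1 - e)` and `x ^ (1 + e)`. -/
theorem exists_prime_in_window (erh : ExtendedRiemannHypothesis) {e : ℝ} (he : 0 < e)
    (he' : e ≤ 1 / 2) : ∃ l₀ : ℝ, 1 ≤ l₀ ∧ ∀ l ≥ l₀, ∀ (m : ℕ) [NeZero m],
      (m : ℝ) ≤ Real.exp (l * (1 / 2 - e)) → ∀ a : ZMod m, IsUnit a →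
      ∃ p : ℕ, p.Prime ∧ (p : ZMod m) = a ∧
        Real.exp (l * (1 - e)) ≤ p ∧ p ≤ Real.exp (l * (1 + e)) := by
  obtain ⟨i, hie⟩ : ∃ i, i = e / 4 := ⟨_, rfl⟩
  obtain ⟨D, hDdef⟩ : ∃ D, D = 32 / i ^ 2 := ⟨_, rfl⟩
  have hi : 0 < i := by linarith
  have hi' : i ≤ 1 / 8 := by linarith
  have hD : D * i ^ 2 = 32 := by rw [hDdef]; field_simp
  have hD0 : 0 < D := by rw [hDdef]; positivity
  have hDi : 256 ≤ D * i := by nlinarith [mul_pos hD0 hi]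
  have hD1 : 1 ≤ D := by nlinarith
  have hDe : 1 ≤ D * e := by nlinarith
  obtain ⟨C, hC, hlow⟩ := exists_le_tsum_residueClass erh hD1 (d := e / 8) (by linarith)
    (by linarith)
  obtain ⟨K, hK⟩ : ∃ K, K = ∑' n : ℕ, vonMangoldt n * (n : ℝ) ^ (-2 : ℝ) := ⟨_, rfl⟩
  have hK0 : 0 ≤ K := by
    rw [hK]
    exact tsum_nonneg fun n ↦ mul_nonneg vonMangoldt_nonneg (by positivity)
  have hlogC : 0 ≤ Real.log C := Real.log_nonneg (by linarith)
  obtain ⟨G, hG⟩ : ∃ G, G = D * ((D + 2) * (2 * (Real.log C + 1) / (e / 8)) + 4 * K + 4) :=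
    ⟨_, rfl⟩
  refine ⟨max 1 (48 * G / e ^ 3 + 1), le_max_left _ _, fun l hl m _ hm a ha ↦ ?_⟩
  have hl1 : 1 ≤ l := (le_max_left _ _).trans hl
  have hlG : 48 * G / e ^ 3 < l := by linarith [(le_max_right _ _).trans hl]
  have hl0 : 0 ≤ l := by linarith
  by_contra! hno
  obtain ⟨k, hkdef⟩ : ∃ k, k = ⌈D * l⌉₊ := ⟨_, rfl⟩
  have hk1 : D * l ≤ k := by rw [hkdef]; exact Nat.le_ceil _
  have hk2 : k ≤ D * l + 1 := by rw [hkdef]; exact (Nat.ceil_lt_add_one (by positivity)).le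
  have hup := tsum_residueClass_le_of_no_prime (m := m) (a := a) (D := D)
    (Y := Real.exp (l * (1 - i))) (X := Real.exp (l * (1 + i))) (t := i) (u := i / 4) hD1
    (Real.one_le_exp (mul_nonneg hl0 (by linarith)))
    (Real.one_le_exp (mul_nonneg hl0 (by linarith))) hi (by linarith) (by linarith)
    (by linarith) (fun p hp hpa hpY hpX ↦ by
      have h1 : Real.exp (l * (1 - e)) ≤ Real.exp (l * (1 - i)) := by gcongr; linarith
      have h2 : Real.exp (l * (1 + i)) ≤ Real.exp (l * (1 + e)) := by gcongr; linarith
      exact (hno p hp hpa (h1.trans hpY)).not_ge (hpX.trans h2)) k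
  have hlow' := hlow m a ha k
  obtain ⟨S, hS⟩ : ∃ S, S = ∑' n : ℕ, residueClass a n * Real.log n ^ k * (n : ℝ) ^ (-(D + 1)) :=
    ⟨_, rfl⟩
  rw [← hS] at hup hlow'
  rw [← hK] at hup
  obtain ⟨w, hw⟩ : ∃ w, w = Real.exp (l * (-1 / 2 + e / 2)) := ⟨_, rfl⟩
  have hw0 : 0 < w := by rw [hw]; positivity
  have hmid := middle_le (e := e) hi hi' (by linarith) hl0
  have hlo := lower_tail_le hi hD hl0 hk1
  have hhi := upper_tail_le hi hi' hD hl0 hk2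
  have hrat := ratio_pow_le he he' hDe hl0 hk1
  have hlw : Real.exp (-l) ≤ w := by rw [hw, Real.exp_le_exp]; nlinarith
  rw [← hw] at hmid hrat
  have hm0 : (1 : ℝ) ≤ m := by exact_mod_cast NeZero.one_le
  have hlogm : Real.log (C * m) ≤ Real.log C + l := by
    rw [Real.log_mul (by linarith) (by linarith)]
    have := (Real.log_le_iff_le_exp (by linarith)).2 hm
    nlinarith
  have hlogm0 : 0 ≤ Real.log (C * m) := Real.log_nonneg (by nlinarith)
  have hφ : w * Real.exp (l * e / 2) ≤ (m.totient : ℝ)⁻¹ := by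
    have h1 : w * Real.exp (l * e / 2) = (Real.exp (l * (1 / 2 - e)))⁻¹ := by
      rw [hw, ← Real.exp_add, ← Real.exp_neg]; ring_nf
    rw [h1]
    have : (0 : ℝ) < m.totient := by exact_mod_cast Nat.totient_pos.2 (NeZero.pos m)
    gcongr
    exact le_trans (by exact_mod_cast Nat.totient_le m) hm
  have hR : 0 < D + 1 / 2 - e / 8 := by linarith
  have hlow'' : (m.totient : ℝ)⁻¹ / D - (k + 1) * (2 * Real.log (C * m) / (e / 8)) *
      (D / (D + 1 / 2 - e / 8)) ^ k ≤ D ^ k / k.factorial * S := by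
    refine le_of_eq_of_le ?_ (mul_le_mul_of_nonneg_left hlow' (by positivity))
    have hk0 : (k.factorial : ℝ) ≠ 0 := by positivity
    have hRne := hR.ne'
    rw [Nat.factorial_succ, div_pow]
    generalize D + 1 / 2 - e / 8 = R at *
    push_cast
    field_simp
    ring
  have herr : (k + 1) * (2 * Real.log (C * m) / (e / 8)) * (D / (D + 1 / 2 - e / 8)) ^ k ≤
      (D * l + 2) * (2 * (Real.log C + l) / (e / 8)) * w := by
    have hk3 : (k : ℝ) + 1 ≤ D * l + 2 := by linarith
    gcongr
  have htail : K * ((1 + i)⁻¹ ^ k * Real.exp (l * (1 - i)) ^ (1 + D * i) +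
      (1 - i / 4)⁻¹ ^ k * Real.exp (l * (1 + i)) ^ (1 - D * (i / 4))) ≤ K * (4 * w) := by
    gcongr
    linarith
  have hmain : w * Real.exp (l * e / 2) / D ≤
      w * ((D * l + 2) * (2 * (Real.log C + l) / (e / 8)) + 4 * K + 4 * l) := by
    have : w * Real.exp (l * e / 2) / D ≤ (m.totient : ℝ)⁻¹ / D := by gcongr
    linarith
  rw [mul_div_assoc, mul_le_mul_iff_right₀ hw0, div_le_iff₀ hD0] at hmain
  have hexp := Real.pow_div_factorial_le_exp (l * e / 2) (by positivity) 3
  have hbd : ((D * l + 2) * (2 * (Real.log C + l) / (e / 8)) + 4 * K + 4 * l) * D ≤ G * l ^ 2 := by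
    have h1 : D * l + 2 ≤ (D + 2) * l := by nlinarith
    have h2 : Real.log C + l ≤ (Real.log C + 1) * l := by nlinarith
    have h3 : l ≤ l ^ 2 := by nlinarith
    have h4 : (1 : ℝ) ≤ l ^ 2 := by nlinarith
    calc _ ≤ ((D + 2) * l * (2 * ((Real.log C + 1) * l) / (e / 8)) + 4 * (K * l ^ 2) +
          4 * l ^ 2) * D := by
          gcongr
          exact le_mul_of_one_le_right hK0 h4
      _ = G * l ^ 2 := by rw [hG]; ring
  rw [div_lt_iff₀ (by positivity)] at hlG
  have h6 : ((3).factorial : ℝ) = 6 := by norm_num [Nat.factorial]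
  rw [h6] at hexp
  have h5 : l ^ 2 * (48 * G) < l ^ 2 * (l * e ^ 3) := by gcongr
  clear hup hlow' hlow'' hmid hlo hhi hlow htail herr hrat
  linarith [hexp.trans (hmain.trans hbd), show (l * e / 2) ^ 3 = l ^ 2 * (l * e ^ 3) / 8 by ring]

end PrimesERH

namespace PrimesERH

lemma exists_prime_not_dvd (j : ℕ) : ∀ {n z : ℕ}, n ≠ 0 → z ≠ 0 → n < z ^ j →
    ∃ p, p.Prime ∧ z < p ∧ p ≤ 2 ^ j * z ∧ ¬ p ∣ n := by
  induction j with
  | zero => intro n z hn _ h; simp at h; exact absurd h hn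
  | succ j ih =>
    intro n z hn hz h
    obtain ⟨p₀, hp₀, hzp, hpz⟩ := Nat.exists_prime_lt_and_le_two_mul z hz
    by_cases hd : p₀ ∣ n
    · obtain ⟨n', rfl⟩ := hd
      have hn' : n' ≠ 0 := by rintro rfl; simp at hn
      have hlt : n' < p₀ ^ j := by
        have h1 : p₀ * n' < p₀ * p₀ ^ j :=
          calc p₀ * n' < z ^ (j + 1) := h
            _ ≤ p₀ ^ (j + 1) := Nat.pow_le_pow_left hzp.le _
            _ = p₀ * p₀ ^ j := pow_succ' _ _
        exact lt_of_mul_lt_mul_left h1 (Nat.zero_le _)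
      obtain ⟨p, hp, hlp, hpl, hnd⟩ := ih hn' hp₀.ne_zero hlt
      refine ⟨p, hp, hzp.trans hlp, ?_, fun hdvd ↦ ?_⟩
      · calc p ≤ 2 ^ j * p₀ := hpl
          _ ≤ 2 ^ j * (2 * z) := Nat.mul_le_mul_left _ hpz
          _ = 2 ^ (j + 1) * z := by ring
      · rcases (Nat.Prime.dvd_mul hp).1 hdvd with h1 | h1
        · exact hlp.ne' ((Nat.prime_dvd_prime_iff_eq hp hp₀).1 h1)
        · exact hnd h1
    · exact ⟨p₀, hp₀, hzp, hpz.trans (Nat.mul_le_mul_right _ (by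
        simpa using Nat.pow_le_pow_right (n := 2) two_pos (Nat.succ_le_succ j.zero_le))), hd⟩

/-- Residues `n` modulo `p` and `1` modulo `q` combine to a unit modulo `p * q`. -/
lemma exists_unit_residue {n p q : ℕ} (hp : p.Prime) (hq : q.Prime) (hpq : p ≠ q)
    (hn : ¬ p ∣ n) : ∃ a : ZMod (p * q), IsUnit a ∧
      ∀ r : ℕ, (r : ZMod (p * q)) = a → r ≡ n [MOD p] ∧ r ≡ 1 [MOD q] := by
  obtain ⟨c, hcp, hcq⟩ := Nat.chineseRemainder ((Nat.coprime_primes hp hq).2 hpq) n 1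
  refine ⟨c, (ZMod.isUnit_iff_coprime _ _).2 (Nat.Coprime.mul_right ?_ ?_), fun r hr ↦ ?_⟩
  · rw [Nat.Coprime, hcp.gcd_eq]
    exact ((Nat.Prime.coprime_iff_not_dvd hp).2 hn).symm
  · rw [Nat.Coprime, hcq.gcd_eq]
    exact Nat.gcd_one_left _
  · have h := (ZMod.natCast_eq_natCast_iff _ _ _).1 hr
    exact ⟨(h.of_mul_right q).trans hcp, (h.of_mul_left p).trans hcq⟩

/-- Under the extended Riemann hypothesis every large `n` is `k * p + r` with `p`, `r` prime and
`r - 1` divisible by a prime `q`, where `p` and `q` are nearly `n ^ (1 / 4)`. -/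
theorem exists_partition (erh : ExtendedRiemannHypothesis) {e : ℝ} (he : 0 < e)
    (he' : e ≤ 1 / 50) : ∃ L₀ : ℝ, ∀ (L : ℝ) (n : ℕ), L₀ ≤ L → (n : ℝ) = Real.exp L →
      128 ≤ Real.exp (L * e) ∧
      ∃ k p r q : ℕ, 0 < k ∧ p.Prime ∧ r.Prime ∧ q.Prime ∧ n = k * p + r ∧ k < r ∧ p ≤ r ∧
        q ∣ r - 1 ∧ Real.exp (L * (5 / 4 - 5 * e)) ≤ (r * q : ℕ) ∧
        Real.exp (L * (5 / 4 - 2 * e)) ≤ 2 * (k * p * (p - 1) : ℕ) := by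
  obtain ⟨l₀, hl₀, hwin⟩ := exists_prime_in_window erh he (by linarith)
  refine ⟨max (2 * l₀) (128 / e), fun L n hL hn ↦ ?_⟩
  have hL1 : 2 * l₀ ≤ L := (le_max_left _ _).trans hL
  have hL2 : 128 ≤ L * e := (div_le_iff₀ he).1 ((le_max_right _ _).trans hL)
  have hL0 : 0 < L := by linarith
  have hT : 128 ≤ Real.exp (L * e) := by linarith [Real.add_one_le_exp (L * e)]
  refine ⟨hT, ?_⟩
  have hn0 : n ≠ 0 := by
    rintro rfl
    exact (Real.exp_pos L).ne (by simpa using hn)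
  obtain ⟨z, hz⟩ : ∃ z, z = ⌈Real.exp (L * (1 / 4 - 2 * e))⌉₊ := ⟨_, rfl⟩
  have hz1 : Real.exp (L * (1 / 4 - 2 * e)) ≤ z := by rw [hz]; exact Nat.le_ceil _
  have hone : 1 ≤ Real.exp (L * (1 / 4 - 2 * e)) :=
    Real.one_le_exp (mul_nonneg hL0.le (by linarith))
  have hz2 : (z : ℝ) ≤ 2 * Real.exp (L * (1 / 4 - 2 * e)) := by
    rw [hz]; linarith [Nat.ceil_lt_add_one (Real.exp_pos (L * (1 / 4 - 2 * e))).le]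
  have hz0 : z ≠ 0 := by
    rintro rfl
    norm_num at hz1; linarith
  have hnz : n < z ^ 5 := by
    have : (n : ℝ) < (z : ℝ) ^ 5 := calc
      (n : ℝ) < Real.exp (L * (1 / 4 - 2 * e)) ^ 5 := by
          rw [hn, ← Real.exp_nat_mul, Real.exp_lt_exp]; push_cast; nlinarith
      _ ≤ (z : ℝ) ^ 5 := by gcongr
    exact_mod_cast this
  obtain ⟨p, hp, hzp, hpz, hpn⟩ := exists_prime_not_dvd 5 hn0 hz0 hnz
  obtain ⟨q, hq, hpq, hqp⟩ := Nat.exists_prime_lt_and_le_two_mul p hp.ne_zero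
  have hzp' : (z : ℝ) + 1 ≤ p := by exact_mod_cast hzp
  have hpz' : (p : ℝ) ≤ 32 * z := by exact_mod_cast hpz
  have hpq' : (p : ℝ) ≤ q := by exact_mod_cast hpq.le
  have hqp' : (q : ℝ) ≤ 2 * p := by exact_mod_cast hqp
  have hq1 : (q : ℝ) ≤ Real.exp (L * (1 / 4 - e)) := by
    have h1 : Real.exp (L * (1 / 4 - e)) =
        Real.exp (L * e) * Real.exp (L * (1 / 4 - 2 * e)) := by
      rw [← Real.exp_add]; ring_nf
    rw [h1]; nlinarith
  obtain ⟨a, ha, har⟩ := exists_unit_residue hp hq hpq.ne hpn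
  have : NeZero (p * q) := ⟨mul_ne_zero hp.ne_zero hq.ne_zero⟩
  have hm : ((p * q : ℕ) : ℝ) ≤ Real.exp (L * (1 - 2 * e) * (1 / 2 - e)) := by
    push_cast
    calc (p : ℝ) * q ≤ Real.exp (L * (1 / 4 - e)) * Real.exp (L * (1 / 4 - e)) := by
          gcongr; linarith
      _ ≤ _ := by
          rw [← Real.exp_add, Real.exp_le_exp]
          nlinarith [mul_pos hL0 (mul_pos he he)]
  obtain ⟨r, hr, hra, hr1, hr2⟩ := hwin (L * (1 - 2 * e)) (by nlinarith) (p * q) hm a ha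
  obtain ⟨hrn, hrq⟩ := har r hra
  have hr1' : Real.exp (L * (1 - 3 * e)) ≤ r := by
    refine le_trans ?_ hr1
    rw [Real.exp_le_exp]
    nlinarith [mul_pos hL0 (mul_pos he he)]
  have hr2' : (r : ℝ) * 128 ≤ n := by
    calc (r : ℝ) * 128 ≤ Real.exp (L * (1 - 2 * e) * (1 + e)) * Real.exp (L * e) := by gcongr
      _ ≤ n := by
          rw [hn, ← Real.exp_add, Real.exp_le_exp]
          nlinarith [mul_pos hL0 (mul_pos he he)]
  have hrn0 : r < n := by
    have h0 : (0 : ℝ) < r := by exact_mod_cast hr.pos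
    have : (r : ℝ) < n := by linarith
    exact_mod_cast this
  obtain ⟨k, hk⟩ := (Nat.modEq_iff_dvd' hrn0.le).1 hrn
  have hnk : n = k * p + r := by rw [mul_comm k p]; omega
  have hnk' : (n : ℝ) = k * p + r := by exact_mod_cast hnk
  have hp0 : (0 : ℝ) < p := by exact_mod_cast hp.pos
  have hr0 : (0 : ℝ) ≤ r := r.cast_nonneg
  have hkp : (n : ℝ) ≤ 2 * (k * p) := by linarith
  refine ⟨k, p, r, q, ?_, hp, hr, hq, hnk, ?_, ?_, ?_, ?_, ?_⟩
  · rcases Nat.eq_zero_or_pos k with rfl | h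
    · simp at hnk; omega
    · exact h
  · have h1 : (k : ℝ) * p < r * p := by
      calc (k : ℝ) * p ≤ n := by linarith
        _ ≤ Real.exp (L * (1 - 3 * e)) * Real.exp (L * (1 / 4 - 2 * e)) := by
            rw [hn, ← Real.exp_add, Real.exp_le_exp]; nlinarith
        _ ≤ r * z := by gcongr
        _ < r * p := by
            have h0 : (0 : ℝ) < r := by exact_mod_cast hr.pos
            gcongr
    exact_mod_cast lt_of_mul_lt_mul_right h1 hp0.le
  · have h1 : (p : ℝ) ≤ r := by
      calc (p : ℝ) ≤ Real.exp (L * (1 / 4 - e)) := hpq'.trans hq1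
        _ ≤ Real.exp (L * (1 - 3 * e)) := by rw [Real.exp_le_exp]; nlinarith
        _ ≤ r := hr1'
    exact_mod_cast h1
  · exact (Nat.modEq_iff_dvd' hr.one_le).1 hrq.symm
  · push_cast
    calc Real.exp (L * (5 / 4 - 5 * e))
        = Real.exp (L * (1 - 3 * e)) * Real.exp (L * (1 / 4 - 2 * e)) := by
          rw [← Real.exp_add]; ring_nf
      _ ≤ r * q := by gcongr; linarith
  · rw [Nat.cast_mul, Nat.cast_mul, Nat.cast_sub hp.one_le, Nat.cast_one]
    calc Real.exp (L * (5 / 4 - 2 * e)) = n * Real.exp (L * (1 / 4 - 2 * e)) := by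
          rw [hn, ← Real.exp_add]; ring_nf
      _ ≤ (2 * (k * p)) * (p - 1) := by gcongr; linarith
      _ = _ := by ring

end PrimesERH

/-- Assuming ERH, for every `ε > 0`, every nontrivial monotone decreasing graph property
of `n`-vertex graphs with at most `n^{5/4-ε}` edges is evasive for all sufficiently
large `n`. -/
theorem sparse_evasive_of_ERH
    (erh : ExtendedRiemannHypothesis) (ε : ℝ) (hε : 0 < ε) :
    ∃ N : ℕ, ∀ n : ℕ, N ≤ n → ∀ P : Set (SimpleGraph (Fin n)),
      IsGraphProperty P → MonotoneDecreasing P → P ≠ ∅ → P ≠ Set.univ →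
      (∀ G ∈ P, (G.edgeSet.ncard : ℝ) ≤ (n : ℝ) ^ ((5 : ℝ) / 4 - ε)) →
      Evasive P := by
  obtain ⟨e, hedef⟩ : ∃ e, e = min (ε / 6) (1 / 50) := ⟨_, rfl⟩
  have he : 0 < e := by rw [hedef]; positivity
  have he6 : e ≤ ε / 6 := by rw [hedef]; exact min_le_left _ _
  obtain ⟨L₀, hpart⟩ := PrimesERH.exists_partition erh he (by rw [hedef]; exact min_le_right _ _)
  refine ⟨⌈Real.exp (max L₀ 0)⌉₊, fun n hn P hP hmono hne _ hedge ↦ ?_⟩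
  by_contra hev
  have hn' : Real.exp (max L₀ 0) ≤ n := Nat.ceil_le.1 hn
  have hn0 : (0 : ℝ) < n := (Real.exp_pos _).trans_le hn'
  have hL : max L₀ 0 ≤ Real.log n := (Real.le_log_iff_exp_le hn0).2 hn'
  have hL0 : 0 ≤ Real.log n := (le_max_right _ _).trans hL
  obtain ⟨hT, k, p, r, q, hk, hp, hr, hq, hnk, hkr, hpr, hqr, h1, h2⟩ :=
    hpart (Real.log n) n ((le_max_left _ _).trans hL) (Real.exp_log hn0).symm
  obtain ⟨G, hG, hmin⟩ := OrderComplex.exists_many_edges hP hmono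
    (Set.nonempty_iff_ne_empty.2 hne) hev hk hp hr hq hnk hkr hpr hqr
  have hGe := hedge G hG
  rw [Real.rpow_def_of_pos hn0] at hGe
  have hexp : 128 * Real.exp (Real.log n * (5 / 4 - ε)) ≤
      Real.exp (Real.log n * (5 / 4 - 5 * e)) := by
    calc _ ≤ Real.exp (Real.log n * e) * Real.exp (Real.log n * (5 / 4 - ε)) := by gcongr
      _ ≤ _ := by
        rw [← Real.exp_add, Real.exp_le_exp, ← mul_add]
        gcongr
        linarith
  have hexp' : Real.exp (Real.log n * (5 / 4 - 5 * e)) ≤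
      Real.exp (Real.log n * (5 / 4 - 2 * e)) := by
    gcongr
    linarith
  have hpos := Real.exp_pos (Real.log n * (5 / 4 - ε))
  rcases min_le_iff.1 hmin with h | h
  · have : ((r * q : ℕ) : ℝ) ≤ 2 * G.edgeSet.ncard := by exact_mod_cast h
    linarith
  · have : ((k * p * (p - 1) : ℕ) : ℝ) ≤ 2 * G.edgeSet.ncard := by exact_mod_cast h
    linarith
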